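/- arXiv:1812.01451 — 2 statements merged into one kernel-verified Lean document; each statement's English description precedes it below -/
import Mathlib

section
/- Let γ > -5 and Λ > 0. For all multi-indices α, λ, κ ∈ ℕ³, the expansion coefficient A_α^{λ,κ} := (1/α!) ∫_{ℝ³} H^α(v) ∇_v·∫_{ℝ³} A(v−v*) ( H^λ(v*)M(v*) ∇_v(H^κ(v)M(v)) − H^λ(v)M(v) ∇_{v*}(H^κ(v*)M(v*)) ) dv* dv of the Fokker-Planck-Landau collision operator satisfies the explicit formula A_α^{λ,κ} = 2^{(γ+3−|α|)/2} Σ_{s,t=1}^{3} Σ_{|p|=0}^{|α|−1} (Λ / q^{[s]}!) ( a_{p, r^{[t]}}^{κ+e_t, λ} − a_{p, r^{[t]}}^{λ, κ+e_t} ) B_{r^{[t]}}^{q^{[s]}}(γ, s, t), where q^{[s]} = α − e_s − p, r^{[t]} = λ + κ + e_t − p, e_s is the s-th unit multi-index, the sums are taken only over those p, s, t for which every component of q^{[s]} and r^{[t]} is nonnegative, a_{p,q}^{λ,κ} = ∏_{i=1}^3 a_{p_i q_i}^{λ_i κ_i}, and B_p^q(γ,s,t) = −G_{st}(γ,p,q)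 + δ_{st} Σ_{r=1}^3 G_{rr}(γ,p,q). -/
open MeasureTheory Real
open scoped BigOperators Classical

noncomputable section

/-- Velocity space ℝ³. -/
abbrev V3 := Fin 3 → ℝ

/-- Euclidean norm |v| on ℝ³. -/
def nrm (v : V3) : ℝ := Real.sqrt (∑ i, v i ^ 2)

/-- The (normalized) Maxwellian M(v) = (2π)^{-3/2} exp(-|v|²/2). -/
def Mxw (v : V3) : ℝ := (2 * π) ^ (-(3 : ℝ) / 2) * Real.exp (-(∑ i, v i ^ 2) / 2)

/-- |α| = α₁ + α₂ + α₃ for a multi-index. -/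
def degIdx (α : Fin 3 → ℕ) : ℕ := α 0 + α 1 + α 2

/-- α! = α₁! α₂! α₃! for a multi-index. -/
def multiFact (α : Fin 3 → ℕ) : ℕ := (α 0).factorial * (α 1).factorial * (α 2).factorial

/-- Multidimensional Hermite polynomial
`H^α(v) = ((-1)^{|α|}/M(v)) ∂^{|α|} M(v) / ∂v₁^{α₁} ∂v₂^{α₂} ∂v₃^{α₃}`. -/
def Herm (α : Fin 3 → ℕ) (v : V3) : ℝ :=
  ((-1 : ℝ) ^ degIdx α / Mxw v) *
    iteratedDeriv (α 0) (fun x1 =>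
      iteratedDeriv (α 1) (fun x2 =>
        iteratedDeriv (α 2) (fun x3 => Mxw ![x1, x2, x3]) (v 2)) (v 1)) (v 0)

/-- Partial derivative ∂f/∂vᵢ. -/
def pd (i : Fin 3) (f : V3 → ℝ) (v : V3) : ℝ := fderiv ℝ f v (Pi.single i 1)

/-- Divergence of a vector field on ℝ³. -/
def div3 (F : V3 → V3) (v : V3) : ℝ := ∑ i, pd i (fun w => F w i) v

/-- Collision kernel matrix A(v) = Λ|v|^{γ+2} Π(v), Π_{ij}(v) = δ_{ij} - vᵢvⱼ/|v|². -/
def Aker (Λ γ : ℝ) (v : V3) (i j : Fin 3) : ℝ :=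
  Λ * nrm v ^ (γ + 2) * ((if i = j then (1 : ℝ) else 0) - v i * v j / nrm v ^ 2)

/-- Fokker-Planck-Landau collision operator
`Q[f](v) = ∇_v · ∫ A(v-v*) (f(v*)∇_v f(v) - f(v)∇_{v*} f(v*)) dv*`. -/
def Qcol (Λ γ : ℝ) (f : V3 → ℝ) (v : V3) : ℝ :=
  div3 (fun w i =>
    ∫ w₁ : V3, ∑ j, Aker Λ γ (w - w₁) i j * (f w₁ * pd j f w - f w * pd j f w₁)) v

/-- G_{st}(γ,p,q) = ∫ |g|^γ g_s g_t H^p(g) H^q(g) M(g) dg. -/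
def Gst (γ : ℝ) (s t : Fin 3) (p q : Fin 3 → ℕ) : ℝ :=
  ∫ g : V3, nrm g ^ γ * g s * g t * Herm p g * Herm q g * Mxw g

/-- Generalized binomial coefficient C(x,k) = x(x-1)⋯(x-k+1)/k!. -/
def genBinom (x : ℝ) (k : ℕ) : ℝ := (∏ j ∈ Finset.range k, (x - j)) / k.factorial

/-- Scalar coefficient a_{pq}^{λκ}, zero unless p+q = λ+κ. -/
def aCoe (p q lam kap : ℕ) : ℝ :=
  if p + q = lam + kap then
    (2 : ℝ) ^ (-(((p : ℝ) + q) / 2)) * lam.factorial * kap.factorial *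
      ∑ s ∈ Finset.Icc (p - kap) (min p lam),
        (-1 : ℝ) ^ ((q : ℤ) - lam + s) /
          ((s.factorial * (lam - s).factorial * (p - s).factorial *
            ((q : ℤ) - lam + s).toNat.factorial : ℕ) : ℝ)
  else 0

/-- Multi-index coefficient a_{p,q}^{λ,κ} = ∏ᵢ a_{pᵢqᵢ}^{λᵢκᵢ}. -/
def aMulti (p q lam kap : Fin 3 → ℕ) : ℝ := ∏ i, aCoe (p i) (q i) (lam i) (kap i)

/-- B_p^q(γ,s,t) = -G_{st}(γ,p,q) + δ_{st} Σ_r G_{rr}(γ,p,q). -/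
def Bcoe (γ : ℝ) (s t : Fin 3) (p q : Fin 3 → ℕ) : ℝ :=
  -Gst γ s t p q + (if s = t then (1 : ℝ) else 0) * ∑ r, Gst γ r r p q

/-- The expansion coefficient A_α^{λ,κ} of the FPL collision operator. -/
def coeA (Λ γ : ℝ) (α lam kap : Fin 3 → ℕ) : ℝ :=
  (1 / (multiFact α : ℝ)) *
    ∫ v : V3, Herm α v *
      div3 (fun w i =>
        ∫ w₁ : V3, ∑ j, Aker Λ γ (w - w₁) i j *
          (Herm lam w₁ * Mxw w₁ * pd j (fun u => Herm kap u * Mxw u) w -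
            Herm lam w * Mxw w * pd j (fun u => Herm kap u * Mxw u) w₁)) v

/-- Multi-indices p with |p| < n, i.e. 0 ≤ |p| ≤ n-1. -/
def idxLt (n : ℕ) : Finset (Fin 3 → ℕ) :=
  (Fintype.piFinset (fun _ : Fin 3 => Finset.range n)).filter (fun p => degIdx p < n)

/-- Pairs of multi-indices (p,q) with p + q = σ. -/
def idxPairs (σ : Fin 3 → ℕ) : Finset ((Fin 3 → ℕ) × (Fin 3 → ℕ)) :=
  ((Fintype.piFinset fun i => Finset.range (σ i + 1)) ×ˢ
      (Fintype.piFinset fun i => Finset.range (σ i + 1))).filter fun x => x.1 + x.2 = σ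

/-- Multi-index permutation operator exchanging the i-th and j-th entries. -/
def swapIdx (i j : Fin 3) (p : Fin 3 → ℕ) : Fin 3 → ℕ := p ∘ Equiv.swap i j

/-- Associated Legendre function
`P_l^m(x) = ((-1)^m/(2^l l!)) (1-x²)^{m/2} d^{l+m}/dx^{l+m} (x²-1)^l`. -/
def assocLegendre (l : ℕ) (m : ℤ) (x : ℝ) : ℝ :=
  ((-1 : ℝ) ^ m * (1 - x ^ 2) ^ ((m : ℝ) / 2) / (2 ^ l * l.factorial)) *
    iteratedDeriv ((l : ℤ) + m).toNat (fun y => (y ^ 2 - 1) ^ l) x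

/-- Spherical harmonic Y_l^m(n), written in terms of cos θ = n₃ and φ = arg(n₁ + i n₂). -/
def sphHarm (l : ℕ) (m : ℤ) (n : V3) : ℂ :=
  ((Real.sqrt ((2 * l + 1) / (4 * π) * ((l : ℤ) - m).toNat.factorial /
      ((l : ℤ) + m).toNat.factorial) * assocLegendre l m (n 2) : ℝ) : ℂ) *
    Complex.exp (Complex.I * m * (Complex.arg ((n 0 : ℂ) + n 1 * Complex.I) : ℝ))

/-- Spherical harmonic with the convention Y_{l'}^{m'} = 0 when |m'| > l' or l' < 0. -/
def sphHarmZ (l m : ℤ) (n : V3) : ℂ :=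
  if 0 ≤ l ∧ m.natAbs ≤ l.toNat then sphHarm l.toNat m n else 0

/-- Surface integral over the unit sphere S² in spherical coordinates. -/
def sphereIntegral (F : V3 → ℂ) : ℂ :=
  ∫ θ in (0 : ℝ)..π, ∫ φ in (0 : ℝ)..(2 * π),
    F ![Real.sin θ * Real.cos φ, Real.sin θ * Real.sin φ, Real.cos θ] * (Real.sin θ : ℂ)

/-- Laguerre polynomial L_n^{(β)}(x) = (x^{-β} eˣ / n!) dⁿ/dxⁿ [x^{n+β} e^{-x}]. -/
def laguerre (n : ℕ) (β : ℝ) (x : ℝ) : ℝ :=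
  (x ^ (-β) * Real.exp x / n.factorial) *
    iteratedDeriv n (fun y => y ^ ((n : ℝ) + β) * Real.exp (-y)) x

/-- Normalized Burnett polynomial B_{α̂}(v) with α̂ = (l, m, nn). -/
def Burnett (l : ℕ) (m : ℤ) (nn : ℕ) (v : V3) : ℂ :=
  ((Real.sqrt ((2 : ℝ) ^ (1 - (l : ℝ)) * π ^ ((3 : ℝ) / 2) * nn.factorial /
        Real.Gamma (nn + l + 3 / 2)) *
      laguerre nn ((l : ℝ) + 1 / 2) (nrm v ^ 2 / 2) * nrm v ^ l : ℝ) : ℂ) *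
    sphHarm l m (fun i => v i / nrm v)

/-- Connection coefficient C_{α̂}^α = ∫ B_{α̂}(v) H^α(v) M(v) dv. -/
def coeC (l : ℕ) (m : ℤ) (nn : ℕ) (α : Fin 3 → ℕ) : ℂ :=
  ∫ v : V3, Burnett l m nn v * ((Herm α v * Mxw v : ℝ) : ℂ)

/-- Burnett indices α̂ = (α̂₁,α̂₂,α̂₃), α̂₂ ∈ {-α̂₁,…,α̂₁}, with |α̂|_B = α̂₁ + 2α̂₃ = N. -/
def burnettIdx (N : ℕ) : Finset (ℕ × ℤ × ℕ) :=
  ((Finset.range (N + 1)) ×ˢ (Finset.Icc (-(N : ℤ)) N) ×ˢ (Finset.range (N + 1))).filter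
    fun x => x.1 + 2 * x.2.2 = N ∧ x.2.1.natAbs ≤ x.1

/-- D_{n₁n₂}^{l₁l₂} = √(n₁!n₂!/(Γ(n₁+l₁+3/2)Γ(n₂+l₂+3/2))). -/
def Dcoe (n1 n2 l1 l2 : ℕ) : ℝ :=
  Real.sqrt ((n1.factorial * n2.factorial : ℝ) /
    (Real.Gamma (n1 + l1 + 3 / 2) * Real.Gamma (n2 + l2 + 3 / 2)))

/-- K(μ,α,κ,m,n) = (-1)^{m+n} Γ(μ+1) Σᵢ C(μ-α,m-i) C(μ-κ,n-i) C(i+μ,i). -/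
def Kcoe (μ a k : ℝ) (m n : ℕ) : ℝ :=
  (-1 : ℝ) ^ (m + n) * Real.Gamma (μ + 1) *
    ∑ i ∈ Finset.range (min m n + 1),
      genBinom (μ - a) (m - i) * genBinom (μ - k) (n - i) * genBinom ((i : ℝ) + μ) i

/-- F_{st}(l₁,m₁,l₂,m₂) = ∫_{S²} n_s n_t Y_{l₁}^{m₁}(n) Y_{l₂}^{m₂}(n) dn. -/
def Fst (s t : Fin 3) (l1 : ℕ) (m1 : ℤ) (l2 : ℕ) (m2 : ℤ) : ℂ :=
  sphereIntegral fun n => ((n s * n t : ℝ) : ℂ) * sphHarm l1 m1 n * sphHarm l2 m2 n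

/-- Kronecker delta on ℤ. -/
def kdZ (a b : ℤ) : ℝ := if a = b then 1 else 0

/-- η_{lm}^μ as in the paper (l, m, μ integers, μ ∈ {-1,0,1}). -/
def eta (l m μ : ℤ) : ℝ :=
  Real.sqrt ((((l : ℝ) + (2 * kdZ 1 μ - 1) * m + kdZ 1 μ) *
      ((l : ℝ) - (2 * kdZ (-1) μ - 1) * m + kdZ (-1) μ)) /
    ((2 : ℝ) ^ μ.natAbs * (2 * l - 1) * (2 * l + 1)))

/-- General Maxwellian M_{ρ,u,θ}. -/
def Mgen (ρ θ : ℝ) (u : V3) (v : V3) : ℝ :=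
  ρ / (2 * π * θ) ^ ((3 : ℝ) / 2) * Real.exp (-(nrm (v - u) ^ 2) / (2 * θ))

/-- Hermite coefficient f_α = (1/α!) ∫ H^α(v) f(v) dv. -/
def hermCoeff (f : V3 → ℝ) (α : Fin 3 → ℕ) : ℝ :=
  (1 / (multiFact α : ℝ)) * ∫ v : V3, Herm α v * f v

/-- τ(t) = 1 - 0.4 e^{-4t}. -/
def tau (t : ℝ) : ℝ := 1 - 0.4 * Real.exp (-4 * t)

/-- The BKW distribution. -/
def fBKW (t : ℝ) (v : V3) : ℝ :=
  (2 * π * tau t) ^ (-(3 : ℝ) / 2) * Real.exp (-(nrm v ^ 2) / (2 * tau t)) *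
    (1 + (1 - tau t) / tau t * (nrm v ^ 2 / (2 * tau t) - 3 / 2))

/-! Integrating by parts against the divergence, and using `∂ᵢ H^α = αᵢ H^(α - eᵢ)` and
`∂ₜ (H^κ M) = -H^(κ + eₜ) M`, turns the coefficient into a combination of the pairings
`∬ A_{st}(v - w) H^β(v) (H^μ M)(v) (H^ν M)(w) dw dv`. The substitution `v = (h + g) / √2`,
`w = (h - g) / √2` is a rotation in each pair of coordinates `(vᵢ, wᵢ)` and preserves the Gaussian.
Hermite polynomials are the images of monomials under `exp (-Δ / 2)`, which commutes with rotations,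
so `H^μ(v) H^ν(w)` expands as `∑_p a_{p, μ + ν - p}^{μ, ν} H^p(h) H^(μ + ν - p)(g)` exactly as
`v^μ w^ν` does, and `H^β(v)` expands binomially. Orthogonality in `h` leaves one term for each `p`,
whose `g`-integral `∫ A_{st}(√2 g) H^(μ + ν - p)(g) H^(β - p)(g) M(g) dg` is a multiple of `B`.
The singularity of `A` is harmless because all derivatives fall on Hermite functions. -/

open Polynomial Asymptotics ProbabilityTheory

/-! ### Hermite polynomials in one variable -/

/-- The value at `x` of the probabilists' Hermite polynomial `Heₙ`. -/
def hermiteEval (n : ℕ) (x : ℝ) : ℝ := aeval x (hermite n)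

/-- The Hermite function `Heₙ φ`, where `φ` is the standard Gaussian density on `ℝ`. -/
def hermiteFun (n : ℕ) (x : ℝ) : ℝ := hermiteEval n x * gaussianPDFReal 0 1 x

@[simp]
theorem hermiteEval_zero (x : ℝ) : hermiteEval 0 x = 1 := by
  simp [hermiteEval]

theorem gaussianPDFReal_zero_one (x : ℝ) :
    gaussianPDFReal 0 1 x = (√(2 * π))⁻¹ * exp (-(x ^ 2 / 2)) := by
  simp [gaussianPDFReal, neg_div]

theorem derivative_hermite_succ (n : ℕ) :
    derivative (hermite (n + 1)) = (n + 1 : ℤ[X]) * hermite n := by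
  induction n with
  | zero => simp
  | succ n ih =>
    rw [hermite_succ (n + 1), derivative_sub, derivative_mul, derivative_X, ih, derivative_mul]
    have hn : derivative (n + 1 : ℤ[X]) = 0 := by simp
    rw [hn, hermite_succ n]
    push_cast
    ring

theorem hasDerivAt_hermiteEval (n : ℕ) (x : ℝ) :
    HasDerivAt (hermiteEval n) (n * hermiteEval (n - 1) x) x := by
  refine ((hermite n).hasDerivAt_aeval x).congr_deriv ?_
  cases n with
  | zero => simp
  | succ n =>
    rw [derivative_hermite_succ]
    simp [hermiteEval]

theorem hermiteEval_succ (n : ℕ) (x : ℝ) :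
    hermiteEval (n + 1) x = x * hermiteEval n x - n * hermiteEval (n - 1) x := by
  rw [(hasDerivAt_hermiteEval n x).unique ((hermite n).hasDerivAt_aeval x)]
  simp [hermiteEval, hermite_succ]

theorem hasDerivAt_gaussianPDFReal_zero_one (x : ℝ) :
    HasDerivAt (gaussianPDFReal 0 1) (-x * gaussianPDFReal 0 1 x) x := by
  rw [funext gaussianPDFReal_zero_one]
  refine ((((hasDerivAt_pow 2 x).div_const 2).neg.exp).const_mul (√(2 * π))⁻¹).congr_deriv ?_
  simp only [Pi.neg_apply]
  push_cast
  ring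

theorem hasDerivAt_hermiteFun (n : ℕ) (x : ℝ) :
    HasDerivAt (hermiteFun n) (-hermiteFun (n + 1) x) x := by
  refine ((hasDerivAt_hermiteEval n x).mul
    (hasDerivAt_gaussianPDFReal_zero_one x)).congr_deriv ?_
  rw [hermiteFun, hermiteEval_succ]
  ring

theorem iteratedDeriv_gaussianPDFReal_zero_one (n : ℕ) :
    iteratedDeriv n (gaussianPDFReal 0 1) = fun x => (-1) ^ n * hermiteFun n x := by
  induction n with
  | zero => simp [hermiteFun]
  | succ n ih =>
    ext x
    rw [iteratedDeriv_succ, ih, ((hasDerivAt_hermiteFun n x).const_mul _).deriv]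
    ring

theorem continuous_hermiteEval (n : ℕ) : Continuous (hermiteEval n) :=
  continuous_iff_continuousAt.2 fun x => (hasDerivAt_hermiteEval n x).continuousAt

theorem continuous_hermiteFun (n : ℕ) : Continuous (hermiteFun n) :=
  continuous_iff_continuousAt.2 fun x => (hasDerivAt_hermiteFun n x).continuousAt

theorem isBigO_id_exp_sq {ε : ℝ} (hε : 0 < ε) :
    (fun x : ℝ => x) =O[⊤] fun x => exp (ε * x ^ 2) := by
  refine isBigO_top.2 ⟨1 / ε + 1, fun x => ?_⟩
  rw [norm_eq_abs, norm_of_nonneg (exp_pos _).le]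
  calc |x| ≤ x ^ 2 + 1 := by nlinarith [sq_abs x, sq_nonneg (|x| - 1)]
    _ ≤ (1 / ε + 1) * (ε * x ^ 2 + 1) := by
      have : (1 / ε + 1) * (ε * x ^ 2 + 1) = x ^ 2 + 1 + (ε * x ^ 2 + 1 / ε) := by
        field_simp
        ring
      rw [this]
      exact le_add_of_nonneg_right (by positivity)
    _ ≤ (1 / ε + 1) * exp (ε * x ^ 2) := by
      gcongr
      exact add_one_le_exp _

theorem isBigO_aeval_exp_sq (p : ℤ[X]) {ε : ℝ} (hε : 0 < ε) :
    (fun x : ℝ => aeval x p) =O[⊤] fun x => exp (ε * x ^ 2) := by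
  induction p using Polynomial.induction_on generalizing ε with
  | C a =>
    refine isBigO_top.2 ⟨|a|, fun x => ?_⟩
    rw [aeval_C, norm_of_nonneg (exp_pos _).le]
    simpa using le_mul_of_one_le_right (abs_nonneg (a : ℝ))
      (one_le_exp (mul_nonneg hε.le (sq_nonneg x)))
  | add p q hp hq => simpa using (hp hε).add (hq hε)
  | monomial n a ih =>
    refine ((ih (half_pos hε)).mul (isBigO_id_exp_sq (half_pos hε))).congr (fun x => ?_)
      fun x => ?_
    · simp [pow_succ, mul_assoc]
    · rw [← exp_add]
      ring_nf

theorem isBigO_hermiteEval (n : ℕ) {ε : ℝ} (hε : 0 < ε) :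
    hermiteEval n =O[⊤] fun x => exp (ε * x ^ 2) :=
  isBigO_aeval_exp_sq (hermite n) hε

theorem isBigO_hermiteFun (n : ℕ) {a : ℝ} (ha : a < 1 / 2) :
    hermiteFun n =O[⊤] fun x => exp (-(a * x ^ 2)) := by
  have hgauss : gaussianPDFReal 0 1 =O[⊤] fun x => exp (-(x ^ 2 / 2)) := by
    rw [funext gaussianPDFReal_zero_one]
    exact isBigO_const_mul_self _ _ _
  refine ((isBigO_hermiteEval n (sub_pos.2 ha)).mul hgauss).congr_right fun x => ?_
  rw [← exp_add]
  ring_nf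

theorem integrable_hermiteEval_mul_hermiteFun (m n : ℕ) :
    Integrable (fun x => hermiteEval m x * hermiteFun n x) := by
  refine (((isBigO_hermiteEval m (ε := 1 / 8) (by norm_num)).mul
    (isBigO_hermiteFun n (a := 3 / 8) (by norm_num))).congr_right fun x => ?_).integrable
    ((continuous_hermiteEval m).mul (continuous_hermiteFun n)).aestronglyMeasurable
    (integrable_exp_neg_mul_sq (b := 1 / 4) (by norm_num))
  rw [← exp_add]
  ring_nf

theorem integral_hermiteEval_mul_hermiteFun_succ (m n : ℕ) :
    ∫ x, hermiteEval m x * hermiteFun (n + 1) x =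
      m * ∫ x, hermiteEval (m - 1) x * hermiteFun n x := by
  have hparts := integral_mul_deriv_eq_deriv_mul_of_integrable
    (fun x _ => hasDerivAt_hermiteEval m x) (fun x _ => hasDerivAt_hermiteFun n x)
    (by simpa [Pi.mul_def] using (integrable_hermiteEval_mul_hermiteFun m (n + 1)).neg)
    (by simpa [Pi.mul_def, mul_assoc] using
      (integrable_hermiteEval_mul_hermiteFun (m - 1) n).const_mul (m : ℝ))
    (integrable_hermiteEval_mul_hermiteFun m n)
  simpa [mul_assoc, integral_neg, integral_const_mul] using hparts

theorem integral_hermiteEval_mul_hermiteFun (m n : ℕ) :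
    ∫ x, hermiteEval m x * hermiteFun n x = if m = n then (n.factorial : ℝ) else 0 := by
  induction n generalizing m with
  | zero =>
    cases m with
    | zero => simpa [hermiteFun] using integral_gaussianPDFReal_eq_one 0 one_ne_zero
    | succ m =>
      calc ∫ x, hermiteEval (m + 1) x * hermiteFun 0 x
          = ∫ x, hermiteEval 0 x * hermiteFun (m + 1) x := by simp [hermiteFun]
        _ = 0 := by
          simp only [integral_hermiteEval_mul_hermiteFun_succ, CharP.cast_eq_zero, zero_mul]
        _ = if m + 1 = 0 then ((0).factorial : ℝ) else 0 := by simp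
  | succ n ih =>
    rw [integral_hermiteEval_mul_hermiteFun_succ, ih]
    rcases m with _ | m
    · simp
    · by_cases h : m = n <;> simp [h, Nat.factorial_succ]

/-! ### Hermite polynomials in several variables -/

section MultiHermite

variable {ι : Type*} [Fintype ι]

/-- The tensor product Hermite polynomial `H^α(v) = ∏ᵢ He_{αᵢ}(vᵢ)`. -/
def multiHermite (α : ι → ℕ) (v : ι → ℝ) : ℝ := ∏ i, hermiteEval (α i) (v i)

/-- The standard Gaussian density (the normalised Maxwellian) on `ℝ^ι`. -/
def gaussianDensity (v : ι → ℝ) : ℝ := ∏ i, gaussianPDFReal 0 1 (v i)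

/-- The Hermite function `H^α M`, where `M` is the standard Gaussian density on `ℝ^ι`. -/
def multiHermiteFun (α : ι → ℕ) (v : ι → ℝ) : ℝ := multiHermite α v * gaussianDensity v

/-- The squared Euclidean norm; the instance norm on `ι → ℝ` is the supremum norm. -/
def sqNorm (v : ι → ℝ) : ℝ := ∑ i, v i ^ 2

/-- The linear form `w ↦ ∑ᵢ cᵢ wᵢ`, in which gradients are expressed. -/
def coordForm (c : ι → ℝ) : (ι → ℝ) →L[ℝ] ℝ :=
  ∑ i, c i • ContinuousLinearMap.proj i

theorem norm_coordForm_le (c : ι → ℝ) : ‖coordForm c‖ ≤ ∑ i, |c i| := by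
  refine ContinuousLinearMap.opNorm_le_bound _ (by positivity) fun w => ?_
  rw [coordForm, sum_apply, Finset.sum_mul]
  refine (norm_sum_le _ _).trans (Finset.sum_le_sum fun i _ => ?_)
  simpa using mul_le_mul_of_nonneg_left (norm_le_pi_norm w i) (abs_nonneg (c i))

theorem continuous_coordForm : Continuous (coordForm : (ι → ℝ) → _) := by
  unfold coordForm
  fun_prop

theorem coordForm_single [DecidableEq ι] (c : ι → ℝ) (i : ι) :
    coordForm c (Pi.single i 1) = c i := by
  simp [coordForm, Pi.single_apply]

theorem sqNorm_nonneg (v : ι → ℝ) : 0 ≤ sqNorm v := by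
  unfold sqNorm
  positivity

theorem continuous_sqNorm : Continuous (sqNorm : (ι → ℝ) → ℝ) := by
  unfold sqNorm
  fun_prop

theorem sqNorm_smul (c : ℝ) (v : ι → ℝ) : sqNorm (c • v) = c ^ 2 * sqNorm v := by
  simp [sqNorm, mul_pow, Finset.mul_sum]

theorem half_sqNorm_sub_le (v z : ι → ℝ) : sqNorm z / 2 - sqNorm v ≤ sqNorm (v - z) := by
  simp only [sqNorm, Finset.sum_div, ← Finset.sum_sub_distrib, Pi.sub_apply]
  gcongr with i
  nlinarith [sq_nonneg (v i * 2 - z i)]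

theorem prod_exp_mul_sq (c : ℝ) (v : ι → ℝ) : ∏ i, exp (c * v i ^ 2) = exp (c * sqNorm v) := by
  rw [← exp_sum, sqNorm, Finset.mul_sum]

theorem integrable_exp_neg_mul_sqNorm {c : ℝ} (hc : 0 < c) :
    Integrable fun v : ι → ℝ => exp (-c * sqNorm v) := by
  simp_rw [← prod_exp_mul_sq]
  exact Integrable.fintype_prod fun _ => integrable_exp_neg_mul_sq hc

theorem multiHermiteFun_eq_prod (α : ι → ℕ) (v : ι → ℝ) :
    multiHermiteFun α v = ∏ i, hermiteFun (α i) (v i) :=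
  Finset.prod_mul_distrib.symm

theorem continuous_multiHermite (α : ι → ℕ) : Continuous (multiHermite α) :=
  continuous_finsetProd _ fun i _ => (continuous_hermiteEval (α i)).comp (continuous_apply i)

theorem continuous_multiHermiteFun (α : ι → ℕ) : Continuous (multiHermiteFun α) := by
  simp_rw [funext (multiHermiteFun_eq_prod α)]
  exact continuous_finsetProd _ fun i _ => (continuous_hermiteFun (α i)).comp (continuous_apply i)

theorem isBigO_multiHermite (α : ι → ℕ) {ε : ℝ} (hε : 0 < ε) :
    multiHermite α =O[⊤] fun v => exp (ε * sqNorm v) := by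
  simp_rw [← prod_exp_mul_sq]
  exact IsBigO.finsetProd fun i _ =>
    (isBigO_hermiteEval (α i) hε).comp_tendsto (k := fun v : ι → ℝ => v i) Filter.tendsto_top

theorem isBigO_multiHermiteFun (α : ι → ℕ) {a : ℝ} (ha : a < 1 / 2) :
    multiHermiteFun α =O[⊤] fun v => exp (-a * sqNorm v) := by
  simp_rw [← prod_exp_mul_sq, funext (multiHermiteFun_eq_prod α), neg_mul]
  exact IsBigO.finsetProd fun i _ =>
    (isBigO_hermiteFun (α i) ha).comp_tendsto (k := fun v : ι → ℝ => v i) Filter.tendsto_top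

theorem isBigO_multiHermite_mul_multiHermiteFun (α β : ι → ℕ) {a : ℝ} (ha : a < 1 / 2) :
    (fun v => multiHermite α v * multiHermiteFun β v) =O[⊤] fun v => exp (-a * sqNorm v) := by
  obtain ⟨b, hab, hb⟩ := exists_between ha
  refine ((isBigO_multiHermite α (sub_pos.2 hab)).mul
    (isBigO_multiHermiteFun β hb)).congr_right fun v => ?_
  rw [← exp_add]
  ring_nf

theorem isBigO_multiHermiteFun_sub (α : ι → ℕ) :
    (fun x : (ι → ℝ) × (ι → ℝ) => multiHermiteFun α (x.1 - x.2)) =O[⊤]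
      fun x => exp (1 / 4 * sqNorm x.1) * exp (-(1 / 8) * sqNorm x.2) := by
  refine ((isBigO_multiHermiteFun α (a := 1 / 4) (by norm_num)).comp_tendsto
    (k := fun x : (ι → ℝ) × (ι → ℝ) => x.1 - x.2) Filter.tendsto_top).trans
    (isBigO_top.2 ⟨1, fun x => ?_⟩)
  rw [one_mul, Function.comp_apply, ← exp_add, norm_of_nonneg (exp_pos _).le,
    norm_of_nonneg (exp_pos _).le, exp_le_exp]
  linarith [half_sqNorm_sub_le x.1 x.2]

theorem integral_multiHermite_mul_multiHermiteFun (α β : ι → ℕ) :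
    ∫ v, multiHermite α v * multiHermiteFun β v =
      if α = β then ((∏ i, (β i).factorial : ℕ) : ℝ) else 0 := by
  simp_rw [multiHermiteFun_eq_prod, multiHermite, ← Finset.prod_mul_distrib]
  rw [integral_fintype_prod_volume_eq_prod
    fun i x => hermiteEval (α i) x * hermiteFun (β i) x]
  simp_rw [integral_hermiteEval_mul_hermiteFun, Fintype.prod_ite_zero, funext_iff]
  push_cast
  rfl

variable [DecidableEq ι]

theorem prod_eq_mul_prod_erase_of_forall_ne {κ M : Type*} [CommMonoid M] (F : ι → κ → M)
    {α β : ι → κ} {i : ι} (h : ∀ j ≠ i, β j = α j) :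
    ∏ j, F j (β j) = F i (β i) * ∏ j ∈ Finset.univ.erase i, F j (α j) := by
  rw [← Finset.mul_prod_erase _ _ (Finset.mem_univ i)]
  congr 1
  exact Finset.prod_congr rfl fun j hj => by rw [h j (Finset.ne_of_mem_erase hj)]

theorem hasFDerivAt_fintype_prod {g : ι → ℝ → ℝ} {g' : ι → ℝ} {v : ι → ℝ}
    (hg : ∀ i, HasDerivAt (g i) (g' i) (v i)) :
    HasFDerivAt (fun w : ι → ℝ => ∏ i, g i (w i))
      (coordForm fun i => g' i * ∏ j ∈ Finset.univ.erase i, g j (v j)) v := by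
  refine (HasFDerivAt.finsetProd fun i _ =>
    (hg i).comp_hasFDerivAt v (hasFDerivAt_apply i v)).congr_fderiv ?_
  simp [coordForm, smul_smul, mul_comm]

theorem hasFDerivAt_multiHermite (α : ι → ℕ) (v : ι → ℝ) :
    HasFDerivAt (multiHermite α)
      (coordForm fun i => α i * multiHermite (α - Pi.single i 1) v) v := by
  refine (hasFDerivAt_fintype_prod fun i => hasDerivAt_hermiteEval (α i) (v i)).congr_fderiv ?_
  congr 1 with i
  rw [multiHermite, prod_eq_mul_prod_erase_of_forall_ne (fun j n => hermiteEval n (v j))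
    (α := α) (i := i) fun j hj => by simp [hj]]
  simp [mul_assoc]

theorem hasFDerivAt_multiHermiteFun (α : ι → ℕ) (v : ι → ℝ) :
    HasFDerivAt (multiHermiteFun α)
      (coordForm fun i => -multiHermiteFun (α + Pi.single i 1) v) v := by
  simp_rw [funext (multiHermiteFun_eq_prod α)]
  refine (hasFDerivAt_fintype_prod fun i => hasDerivAt_hermiteFun (α i) (v i)).congr_fderiv ?_
  congr 1 with i
  rw [multiHermiteFun_eq_prod, prod_eq_mul_prod_erase_of_forall_ne
    (fun j n => hermiteFun n (v j)) (α := α) (i := i) fun j hj => by simp [hj]]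
  simp

theorem multiHermite_add_single (α : ι → ℕ) (i : ι) (v : ι → ℝ) :
    multiHermite (α + Pi.single i 1) v =
      v i * multiHermite α v - α i * multiHermite (α - Pi.single i 1) v := by
  have herase (β : ι → ℕ) (h : ∀ j ≠ i, β j = α j) := prod_eq_mul_prod_erase_of_forall_ne
    (fun j n => hermiteEval n (v j)) h
  simp only [multiHermite]
  rw [herase _ fun j hj => by simp [hj], herase α fun _ _ => rfl,
    herase (α - _) fun j hj => by simp [hj]]
  simp only [Pi.add_apply, Pi.sub_apply, Pi.single_eq_same, hermiteEval_succ]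
  ring

end MultiHermite

/-! ### Covariance of the Hermite polynomials under rotations -/

section Umbral

variable {ι : Type*} [Fintype ι]

/-- Evaluation at `v` after the umbral substitution `X^α ↦ H^α`; this is `exp (-Δ/2)` followed by
evaluation. -/
def hermiteUmbral (v : ι → ℝ) : MvPolynomial ι ℝ →ₗ[ℝ] ℝ :=
  (MvPolynomial.basisMonomials ι ℝ).constr ℝ fun α => multiHermite α v

theorem hermiteUmbral_monomial (v : ι → ℝ) (α : ι →₀ ℕ) (c : ℝ) :
    hermiteUmbral v (MvPolynomial.monomial α c) = c * multiHermite α v := by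
  have hbasis := (MvPolynomial.basisMonomials ι ℝ).constr_basis ℝ (fun α => multiHermite α v) α
  rw [MvPolynomial.coe_basisMonomials] at hbasis
  rw [← mul_one c, ← smul_eq_mul, ← MvPolynomial.smul_monomial, map_smul, hermiteUmbral, hbasis]
  simp

theorem hermiteUmbral_X_mul (v : ι → ℝ) (i : ι) (P : MvPolynomial ι ℝ) :
    hermiteUmbral v (MvPolynomial.X i * P) =
      v i * hermiteUmbral v P - hermiteUmbral v (MvPolynomial.pderiv i P) := by
  induction P using MvPolynomial.induction_on' with
  | monomial α c =>
    have hadd : ((α + Finsupp.single i 1 : ι →₀ ℕ) : ι → ℕ) = ⇑α + Pi.single i 1 := by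
      rw [Finsupp.coe_add, Finsupp.single_eq_pi_single]
    have hsub : ((α - Finsupp.single i 1 : ι →₀ ℕ) : ι → ℕ) = ⇑α - Pi.single i 1 := by
      rw [Finsupp.coe_tsub, Finsupp.single_eq_pi_single]
    rw [mul_comm, MvPolynomial.X, MvPolynomial.monomial_mul, MvPolynomial.pderiv_monomial]
    simp only [hermiteUmbral_monomial, hadd, hsub, multiHermite_add_single]
    ring
  | add P Q hP hQ =>
    rw [mul_add, map_add, hP, hQ]
    simp only [map_add]
    ring

variable {κ : Type*} [DecidableEq κ]

/-- The linear change of variables `X_k ↦ ∑ᵢ U_{ki} Xᵢ`. -/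
def linearSubst (U : Matrix κ ι ℝ) : MvPolynomial κ ℝ →ₐ[ℝ] MvPolynomial ι ℝ :=
  MvPolynomial.aeval fun k => ∑ i, U k i • MvPolynomial.X i

theorem sum_smul_pderiv_linearSubst {U : Matrix κ ι ℝ} (hU : U * U.transpose = 1) (k : κ)
    (P : MvPolynomial κ ℝ) :
    ∑ i, U k i • MvPolynomial.pderiv i (linearSubst U P) =
      linearSubst U (MvPolynomial.pderiv k P) := by
  have horth (j : κ) : ∑ i, U k i * U j i = if k = j then 1 else 0 := by
    rw [← Matrix.one_apply, ← hU, Matrix.mul_apply]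
    rfl
  induction P using MvPolynomial.induction_on with
  | C c => simp [linearSubst, MvPolynomial.algebraMap_eq]
  | add P Q hP hQ => simp [smul_add, Finset.sum_add_distrib, hP, hQ]
  | mul_X P j hP =>
    have hX : ∑ i, U k i • MvPolynomial.pderiv i (linearSubst U (MvPolynomial.X j)) =
        linearSubst U (MvPolynomial.pderiv k (MvPolynomial.X j)) := by
      have hpd (i : ι) : MvPolynomial.pderiv i (linearSubst U (MvPolynomial.X j)) =
          MvPolynomial.C (U j i) := by
        simp [linearSubst, MvPolynomial.pderiv_X, Pi.single_apply, MvPolynomial.smul_eq_C_mul]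
      simp only [hpd, MvPolynomial.smul_eq_C_mul, ← MvPolynomial.C_mul, ← map_sum, horth,
        MvPolynomial.pderiv_X, Pi.single_apply]
      by_cases hkj : k = j <;> simp [hkj, eq_comm]
    simp only [map_mul, Derivation.leibniz, smul_add, Finset.sum_add_distrib, map_add, smul_eq_mul,
      ← mul_smul_comm, ← Finset.mul_sum, hX, hP]

theorem hermiteUmbral_linearSubst_X_mul {U : Matrix κ ι ℝ} (hU : U * U.transpose = 1)
    (v : ι → ℝ) (k : κ) (P : MvPolynomial κ ℝ) :
    hermiteUmbral v (linearSubst U (MvPolynomial.X k * P)) =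
      U.mulVec v k * hermiteUmbral v (linearSubst U P) -
        hermiteUmbral v (linearSubst U (MvPolynomial.pderiv k P)) := by
  rw [map_mul, ← sum_smul_pderiv_linearSubst hU]
  simp only [linearSubst, MvPolynomial.aeval_X, Finset.sum_mul, smul_mul_assoc, map_sum, map_smul,
    smul_eq_mul, hermiteUmbral_X_mul, Matrix.mulVec, dotProduct, mul_sub, Finset.sum_sub_distrib,
    mul_assoc]

theorem hermiteUmbral_linearSubst_monomial [Fintype κ] {U : Matrix κ ι ℝ}
    (hU : U * U.transpose = 1) (v : ι → ℝ) (α : κ →₀ ℕ) (c : ℝ) :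
    hermiteUmbral v (linearSubst U (MvPolynomial.monomial α c)) =
      hermiteUmbral (U.mulVec v) (MvPolynomial.monomial α c) := by
  induction hn : α.degree using Nat.strong_induction_on generalizing α c with
  | _ n ih =>
    rcases eq_or_ne α 0 with rfl | hα
    · have hconst : linearSubst U (MvPolynomial.monomial 0 c) = MvPolynomial.monomial 0 c :=
        MvPolynomial.aeval_C _ c
      rw [hconst, hermiteUmbral_monomial, hermiteUmbral_monomial]
      simp [multiHermite]
    · obtain ⟨k, hk⟩ := Finsupp.ne_iff.1 hα
      obtain ⟨β, rfl⟩ := exists_add_of_le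
        (Finsupp.single_le_iff.2 (Nat.one_le_iff_ne_zero.2 hk) : Finsupp.single k 1 ≤ α)
      have hX : MvPolynomial.monomial (Finsupp.single k 1 + β) c =
          MvPolynomial.X k * MvPolynomial.monomial β c := by
        rw [MvPolynomial.X, MvPolynomial.monomial_mul, one_mul]
      have hβ : β.degree < n := by simp [← hn]
      have hsub : (β - Finsupp.single k 1).degree < n :=
        (Finsupp.degree_mono tsub_le_self).trans_lt hβ
      rw [hX, hermiteUmbral_linearSubst_X_mul hU, hermiteUmbral_X_mul,
        MvPolynomial.pderiv_monomial, ih _ hβ _ _ rfl, ih _ hsub _ _ rfl]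

theorem hermiteUmbral_linearSubst [Fintype κ] {U : Matrix κ ι ℝ} (hU : U * U.transpose = 1)
    (v : ι → ℝ) (P : MvPolynomial κ ℝ) :
    hermiteUmbral v (linearSubst U P) = hermiteUmbral (U.mulVec v) P := by
  induction P using MvPolynomial.induction_on' with
  | monomial α c => exact hermiteUmbral_linearSubst_monomial hU v α c
  | add P Q hP hQ => simp only [map_add, hP, hQ]

end Umbral

/-- The coefficient of `He_p(h) He_{l+k-p}(g)` in the Hermite expansion of
`He_l((h+g)/√2) He_k((h-g)/√2)`. -/
def rotationCoeff (l k p : ℕ) : ℝ :=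
  (√2)⁻¹ ^ (l + k) * ((X + 1) ^ l * (X - 1) ^ k : ℝ[X]).coeff p

theorem homogenize_X_add_one_pow_mul_X_sub_one_pow (l k : ℕ) :
    ((X + 1) ^ l * (X - 1) ^ k : ℝ[X]).homogenize (l + k) =
      (MvPolynomial.X 0 + MvPolynomial.X 1) ^ l * (MvPolynomial.X 0 - MvPolynomial.X 1) ^ k := by
  refine homogenize_eq_of_isHomogeneous ?_ (by simp)
  have hX (i : Fin 2) := MvPolynomial.isHomogeneous_X ℝ i
  simpa using (((hX 0).add (hX 1)).pow l).mul (((hX 0).sub (hX 1)).pow k)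

/-- The orthogonal matrix of `(h, g) ↦ ((h + g)/√2, (h - g)/√2)`. -/
def hadamard : Matrix (Fin 2) (Fin 2) ℝ := (√2)⁻¹ • !![1, 1; 1, -1]

theorem inv_sqrt_two_mul_self : (√2)⁻¹ * (√2)⁻¹ = 1 / 2 := by
  rw [← mul_inv, mul_self_sqrt zero_le_two, one_div]

theorem hadamard_mul_transpose : hadamard * hadamard.transpose = 1 := by
  have hsum : (√2)⁻¹ * (√2)⁻¹ + (√2)⁻¹ * (√2)⁻¹ = 1 := by
    rw [inv_sqrt_two_mul_self]
    norm_num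
  ext i j
  fin_cases i <;> fin_cases j <;>
    simp [hadamard, Matrix.mul_apply, Fin.sum_univ_two, hsum]

theorem hadamard_mulVec (h g : ℝ) :
    hadamard.mulVec ![h, g] = ![(√2)⁻¹ * (h + g), (√2)⁻¹ * (h - g)] := by
  ext i
  fin_cases i <;> simp [hadamard] <;> ring

theorem linearSubst_hadamard (l k : ℕ) :
    linearSubst hadamard (MvPolynomial.X 0 ^ l * MvPolynomial.X 1 ^ k) =
      (√2)⁻¹ ^ (l + k) • ((X + 1) ^ l * (X - 1) ^ k : ℝ[X]).homogenize (l + k) := by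
  have hzero : linearSubst hadamard (MvPolynomial.X 0) =
      (√2)⁻¹ • (MvPolynomial.X 0 + MvPolynomial.X 1) := by
    simp [linearSubst, hadamard, Fin.sum_univ_two, smul_add]
  have hone : linearSubst hadamard (MvPolynomial.X 1) =
      (√2)⁻¹ • (MvPolynomial.X 0 - MvPolynomial.X 1) := by
    simp [linearSubst, hadamard, Fin.sum_univ_two, sub_eq_add_neg]
  rw [homogenize_X_add_one_pow_mul_X_sub_one_pow, map_mul, map_pow, map_pow, hzero, hone,
    _root_.smul_pow, _root_.smul_pow, smul_mul_smul_comm, pow_add]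

theorem hermiteUmbral_X_pow_mul_X_pow (l k : ℕ) (h g : ℝ) :
    hermiteUmbral ![h, g] (MvPolynomial.X 0 ^ l * MvPolynomial.X 1 ^ k) =
      hermiteEval l h * hermiteEval k g := by
  rw [MvPolynomial.X_pow_eq_monomial, MvPolynomial.X_pow_eq_monomial, MvPolynomial.monomial_mul,
    hermiteUmbral_monomial]
  simp [multiHermite]

theorem hermiteUmbral_homogenize (P : ℝ[X]) (n : ℕ) (h g : ℝ) :
    hermiteUmbral ![h, g] (P.homogenize n) =
      ∑ p ∈ Finset.Iic n, P.coeff p * (hermiteEval p h * hermiteEval (n - p) g) := by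
  rw [homogenize, map_sum, Finset.Nat.sum_antidiagonal_eq_sum_range_succ_mk,
    Nat.range_succ_eq_Iic]
  simp [hermiteUmbral_monomial, multiHermite]

theorem hermiteEval_mul_hermiteEval_rotate (l k : ℕ) (h g : ℝ) :
    hermiteEval l ((√2)⁻¹ * (h + g)) * hermiteEval k ((√2)⁻¹ * (h - g)) =
      ∑ p ∈ Finset.Iic (l + k),
        rotationCoeff l k p * (hermiteEval p h * hermiteEval (l + k - p) g) := by
  rw [← hermiteUmbral_X_pow_mul_X_pow, ← hadamard_mulVec,
    ← hermiteUmbral_linearSubst hadamard_mul_transpose, linearSubst_hadamard, map_smul,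
    smul_eq_mul, hermiteUmbral_homogenize, Finset.mul_sum]
  simp only [rotationCoeff, mul_assoc]

theorem coeff_X_add_one_pow_mul_X_sub_one_pow (l k p : ℕ) :
    ((X + 1) ^ l * (X - 1) ^ k : ℝ[X]).coeff p =
      ∑ s ∈ Finset.range (p + 1), (l.choose s : ℝ) * ((-1) ^ (k - (p - s)) * k.choose (p - s)) := by
  have hsub : (X - 1 : ℝ[X]) = X + C (-1) := by simp [sub_eq_add_neg]
  rw [coeff_mul, Finset.Nat.sum_antidiagonal_eq_sum_range_succ_mk, hsub]
  simp only [coeff_X_add_one_pow, coeff_X_add_C_pow]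

theorem rotationCoeff_zero_right (l p : ℕ) :
    rotationCoeff l 0 p = (√2)⁻¹ ^ l * l.choose p := by
  simp [rotationCoeff, coeff_X_add_one_pow]

theorem aCoe_eq_rotationCoeff {p l k : ℕ} (hp : p ≤ l + k) :
    aCoe p (l + k - p) l k = rotationCoeff l k p := by
  have hsum : ((l + k - p : ℕ) : ℝ) = l + k - p := by
    rw [Nat.cast_sub hp, Nat.cast_add]
  have hpow : (2 : ℝ) ^ (-(((p : ℝ) + (l + k - p : ℕ)) / 2)) = (√2)⁻¹ ^ (l + k) := by
    rw [hsum, ← sqrt_inv, sqrt_eq_rpow, ← rpow_mul_natCast (by positivity), inv_rpow zero_le_two,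
      ← rpow_neg zero_le_two]
    push_cast
    ring_nf
  rw [aCoe, if_pos (by lia), hpow, rotationCoeff, coeff_X_add_one_pow_mul_X_sub_one_pow, mul_assoc,
    mul_assoc, Finset.mul_sum, Finset.mul_sum]
  congr 1
  refine Finset.sum_subset_zero_on_sdiff (fun s hs => ?_) (fun s hs => ?_) fun s hs => ?_
  · simp only [Finset.mem_Icc, Finset.mem_range] at hs ⊢
    lia
  · simp only [Finset.mem_Icc, Finset.mem_range, Finset.mem_sdiff] at hs
    rcases lt_or_ge l s with hls | hls
    · simp [Nat.choose_eq_zero_of_lt hls]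
    · simp [Nat.choose_eq_zero_of_lt (show k < p - s by lia)]
  · rw [Finset.mem_Icc] at hs
    have hexp : ((l + k - p : ℕ) : ℤ) - l + s = (k - (p - s) : ℕ) := by lia
    rw [hexp, Int.toNat_natCast, zpow_natCast, Nat.cast_choose ℝ (show s ≤ l by lia),
      Nat.cast_choose ℝ (show p - s ≤ k by lia)]
    push_cast
    field_simp

section MultiRotation

variable {ι : Type*} [Fintype ι]

/-- The coefficient of `H^p(h) H^{μ+ν-p}(g)` in the Hermite expansion of
`H^μ((h+g)/√2) H^ν((h-g)/√2)`. -/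
def multiRotationCoeff (μ ν p : ι → ℕ) : ℝ := ∏ i, rotationCoeff (μ i) (ν i) (p i)

theorem gaussianDensity_rotate (h g : ι → ℝ) :
    gaussianDensity ((√2)⁻¹ • (h + g)) * gaussianDensity ((√2)⁻¹ • (h - g)) =
      gaussianDensity h * gaussianDensity g := by
  simp only [gaussianDensity, ← Finset.prod_mul_distrib]
  refine Finset.prod_congr rfl fun i _ => ?_
  have hsq : ((√2)⁻¹ : ℝ) ^ 2 = 1 / 2 := by rw [sq, inv_sqrt_two_mul_self]
  simp only [gaussianPDFReal_zero_one, Pi.smul_apply, Pi.add_apply, Pi.sub_apply, smul_eq_mul,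
    mul_pow, hsq]
  rw [mul_mul_mul_comm, mul_mul_mul_comm _ _ (√(2 * π))⁻¹, ← exp_add, ← exp_add]
  ring_nf

theorem multiRotationCoeff_zero_right_mul_factorial {β p : ι → ℕ} (hp : p ≤ β) :
    multiRotationCoeff β 0 p * (∏ i, (p i).factorial : ℕ) =
      (√2)⁻¹ ^ (∑ i, β i) * ((∏ i, (β i).factorial : ℕ) / (∏ i, ((β - p) i).factorial : ℕ)) := by
  push_cast
  rw [multiRotationCoeff, ← Finset.prod_pow_eq_pow_sum, ← Finset.prod_div_distrib,
    ← Finset.prod_mul_distrib, ← Finset.prod_mul_distrib]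
  refine Finset.prod_congr rfl fun i _ => ?_
  rw [Pi.zero_apply, rotationCoeff_zero_right, Pi.sub_apply, Nat.cast_choose ℝ (hp i)]
  field_simp

theorem integrable_multiHermite_mul_multiHermiteFun (α β : ι → ℕ) :
    Integrable fun v => multiHermite α v * multiHermiteFun β v :=
  (isBigO_multiHermite_mul_multiHermiteFun α β (a := 1 / 4) (by norm_num)).integrable
    ((continuous_multiHermite α).mul (continuous_multiHermiteFun β)).aestronglyMeasurable
    (integrable_exp_neg_mul_sqNorm (by norm_num))

variable [DecidableEq ι]

theorem multiHermite_mul_multiHermite_rotate (μ ν : ι → ℕ) (h g : ι → ℝ) :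
    multiHermite μ ((√2)⁻¹ • (h + g)) * multiHermite ν ((√2)⁻¹ • (h - g)) =
      ∑ p ∈ Finset.Iic (μ + ν),
        multiRotationCoeff μ ν p * (multiHermite p h * multiHermite (μ + ν - p) g) := by
  simp only [multiHermite, multiRotationCoeff, ← Finset.prod_mul_distrib, Pi.smul_apply,
    Pi.add_apply, Pi.sub_apply, smul_eq_mul, hermiteEval_mul_hermiteEval_rotate]
  exact Finset.prod_univ_sum _ _

theorem multiHermite_rotate (β : ι → ℕ) (h g : ι → ℝ) :
    multiHermite β ((√2)⁻¹ • (h + g)) =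
      ∑ p ∈ Finset.Iic β,
        multiRotationCoeff β 0 p * (multiHermite p h * multiHermite (β - p) g) := by
  simpa [multiHermite] using multiHermite_mul_multiHermite_rotate β 0 h g

theorem integral_multiHermite_rotate (β μ ν : ι → ℕ) (g : ι → ℝ) :
    ∫ h, multiHermite β ((√2)⁻¹ • (h + g)) * (multiHermite μ ((√2)⁻¹ • (h + g)) *
        multiHermite ν ((√2)⁻¹ • (h - g))) * gaussianDensity h =
      ∑ p ∈ Finset.Iic (β ⊓ (μ + ν)),
        (√2)⁻¹ ^ (∑ i, β i) * ((∏ i, (β i).factorial : ℕ) / (∏ i, ((β - p) i).factorial : ℕ)) *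
          multiRotationCoeff μ ν p *
            (multiHermite (μ + ν - p) g * multiHermite (β - p) g) := by
  have hexpand (h : ι → ℝ) :
      multiHermite β ((√2)⁻¹ • (h + g)) * (multiHermite μ ((√2)⁻¹ • (h + g)) *
          multiHermite ν ((√2)⁻¹ • (h - g))) * gaussianDensity h =
        ∑ q ∈ Finset.Iic β, ∑ p ∈ Finset.Iic (μ + ν),
          multiRotationCoeff β 0 q * multiRotationCoeff μ ν p *
            (multiHermite (μ + ν - p) g * multiHermite (β - q) g) *
              (multiHermite q h * multiHermiteFun p h) := by
    rw [multiHermite_rotate, multiHermite_mul_multiHermite_rotate, Finset.sum_mul_sum,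
      Finset.sum_mul]
    refine Finset.sum_congr rfl fun q _ => ?_
    rw [Finset.sum_mul]
    refine Finset.sum_congr rfl fun p _ => ?_
    rw [multiHermiteFun]
    ring
  have hint (q p : ι → ℕ) (c : ℝ) :
      Integrable fun h => c * (multiHermite q h * multiHermiteFun p h) :=
    (integrable_multiHermite_mul_multiHermiteFun q p).const_mul c
  have hinf : Finset.Iic (β ⊓ (μ + ν)) = {q ∈ Finset.Iic β | q ∈ Finset.Iic (μ + ν)} := by
    ext q
    simp only [Finset.mem_filter, Finset.mem_Iic, le_inf_iff]
  simp_rw [hexpand]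
  rw [integral_finsetSum _ fun q _ => integrable_finsetSum _ fun p _ => hint q p _,
    hinf, Finset.sum_filter]
  refine Finset.sum_congr rfl fun q hq => ?_
  simp_rw [integral_finsetSum _ fun p _ => hint q p _, integral_const_mul,
    integral_multiHermite_mul_multiHermiteFun, mul_ite, mul_zero, Finset.sum_ite_eq]
  refine if_congr Iff.rfl ?_ rfl
  rw [← multiRotationCoeff_zero_right_mul_factorial (Finset.mem_Iic.1 hq)]
  ring

end MultiRotation

/-! ### Convolution of a singular kernel with Hermite functions -/

section Convolution

open scoped Convolution

variable {ι : Type*} [Fintype ι] {K : (ι → ℝ) → ℝ}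

/-- Kernels which are integrable against every centred Gaussian. -/
def GaussIntegrable (K : (ι → ℝ) → ℝ) : Prop :=
  ∀ c > 0, Integrable fun z => K z * exp (-c * sqNorm z)

theorem GaussIntegrable.aestronglyMeasurable (hK : GaussIntegrable K) :
    AEStronglyMeasurable K := by
  refine ((hK 1 one_pos).aestronglyMeasurable.mul
    continuous_sqNorm.rexp.aestronglyMeasurable).congr (.of_forall fun z => ?_)
  simp [mul_assoc, ← exp_add]

theorem GaussIntegrable.integrable_mul (hK : GaussIntegrable K) {f : (ι → ℝ) → ℝ}
    (hf : Continuous f) {c : ℝ} (hc : 0 < c) (hfO : f =O[⊤] fun z => exp (-c * sqNorm z)) :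
    Integrable fun z => K z * f z :=
  ((isBigO_refl K ⊤).mul hfO).integrable (hK.aestronglyMeasurable.mul hf.aestronglyMeasurable)
    (hK c hc)

theorem GaussIntegrable.comp_smul (hK : GaussIntegrable K) {R : ℝ} (hR : R ≠ 0) :
    GaussIntegrable fun z => K (R • z) := by
  intro c hc
  have hR2 : 0 < R ^ 2 := by positivity
  convert (hK (c / R ^ 2) (div_pos hc hR2)).comp_smul hR using 4 with z
  rw [sqNorm_smul]
  field_simp

/-- The convolution `K ∗ (H^α M)`. -/
def hermiteConv (K : (ι → ℝ) → ℝ) (α : ι → ℕ) : (ι → ℝ) → ℝ :=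
  K ⋆[ContinuousLinearMap.mul ℝ ℝ] multiHermiteFun α

theorem hermiteConv_apply (K : (ι → ℝ) → ℝ) (α : ι → ℕ) (v : ι → ℝ) :
    hermiteConv K α v = ∫ z, K z * multiHermiteFun α (v - z) :=
  rfl

theorem hermiteConv_apply_swap (K : (ι → ℝ) → ℝ) (α : ι → ℕ) (v : ι → ℝ) :
    hermiteConv K α v = ∫ w, K (v - w) * multiHermiteFun α w :=
  convolution_eq_swap _

theorem GaussIntegrable.integrable_mul_multiHermiteFun_sub (hK : GaussIntegrable K) (α : ι → ℕ)
    (v : ι → ℝ) : Integrable fun z => K z * multiHermiteFun α (v - z) := by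
  have hshift : (fun z => multiHermiteFun α (v - z)) =O[⊤]
      fun z => exp (1 / 4 * sqNorm v) * exp (-(1 / 8) * sqNorm z) :=
    (isBigO_multiHermiteFun_sub α).comp_tendsto (k := fun z => (v, z)) Filter.tendsto_top
  exact hK.integrable_mul ((continuous_multiHermiteFun α).comp (by fun_prop))
    (c := 1 / 8) (by norm_num) (hshift.trans (isBigO_const_mul_self _ _ _))

theorem GaussIntegrable.isBigO_hermiteConv (hK : GaussIntegrable K) (α : ι → ℕ) :
    hermiteConv K α =O[⊤] fun v => exp (1 / 4 * sqNorm v) := by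
  obtain ⟨C, hC⟩ := isBigO_top.1 (isBigO_multiHermiteFun_sub α)
  refine isBigO_top.2 ⟨∫ z, C * ‖K z * exp (-(1 / 8) * sqNorm z)‖, fun v => ?_⟩
  rw [hermiteConv_apply, ← integral_mul_const]
  refine norm_integral_le_of_norm_le
    (((hK _ (by norm_num)).norm.const_mul C).mul_const _) (.of_forall fun z => ?_)
  calc ‖K z * multiHermiteFun α (v - z)‖
      ≤ ‖K z‖ * (C * ‖exp (1 / 4 * sqNorm v) * exp (-(1 / 8) * sqNorm z)‖) := by
        rw [norm_mul]
        exact mul_le_mul_of_nonneg_left (hC (v, z)) (norm_nonneg _)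
    _ = C * ‖K z * exp (-(1 / 8) * sqNorm z)‖ * ‖exp (1 / 4 * sqNorm v)‖ := by
        simp only [norm_mul]
        ring

variable [DecidableEq ι]

theorem GaussIntegrable.integral_smul_coordForm (hK : GaussIntegrable K) (α : ι → ℕ)
    (v : ι → ℝ) :
    ∫ z, K z • coordForm (fun i : ι => -multiHermiteFun (α + Pi.single i 1) (v - z)) =
      coordForm fun i => -hermiteConv K (α + Pi.single i 1) v := by
  simp_rw [coordForm, Finset.smul_sum, smul_smul, mul_neg]
  rw [integral_finsetSum _ fun i _ =>
    (hK.integrable_mul_multiHermiteFun_sub _ v).fun_neg.smul_const _]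
  simp_rw [integral_smul_const, integral_neg, hermiteConv_apply]

theorem GaussIntegrable.hasFDerivAt_hermiteConv (hK : GaussIntegrable K) (α : ι → ℕ)
    (v : ι → ℝ) :
    HasFDerivAt (hermiteConv K α)
      (coordForm fun i => -hermiteConv K (α + Pi.single i 1) v) v := by
  choose C hC using fun i => isBigO_top.1 (isBigO_multiHermiteFun_sub (α + Pi.single i 1))
  have hnhds : {w : ι → ℝ | sqNorm w < sqNorm v + 1} ∈ nhds v :=
    (isOpen_lt continuous_sqNorm continuous_const).mem_nhds (lt_add_one (sqNorm v))
  have hderiv (z w : ι → ℝ) : HasFDerivAt (fun w => K z * multiHermiteFun α (w - z))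
      (K z • coordForm fun i : ι => -multiHermiteFun (α + Pi.single i 1) (w - z)) w := by
    simpa using ((hasFDerivAt_multiHermiteFun α (w - z)).comp w
      ((hasFDerivAt_id w).sub_const z)).const_mul (K z)
  have hbound (z w : ι → ℝ) (hw : sqNorm w < sqNorm v + 1) :
      ‖K z • coordForm fun i : ι => -multiHermiteFun (α + Pi.single i 1) (w - z)‖ ≤
        (∑ i, |C i| * exp (1 / 4 * (sqNorm v + 1))) * ‖K z * exp (-(1 / 8) * sqNorm z)‖ := by
    rw [norm_smul, norm_mul, mul_left_comm, Finset.sum_mul]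
    refine mul_le_mul_of_nonneg_left ((norm_coordForm_le _).trans
      (Finset.sum_le_sum fun i _ => ?_)) (norm_nonneg _)
    have hCi := hC i (w, z)
    rw [norm_mul, ← mul_assoc, norm_of_nonneg (exp_pos (1 / 4 * sqNorm w)).le] at hCi
    rw [abs_neg]
    refine hCi.trans ?_
    gcongr
    exact le_abs_self _
  rw [← hK.integral_smul_coordForm]
  refine hasFDerivAt_integral_of_dominated_of_fderiv_le hnhds
    (.of_forall fun w => (hK.integrable_mul_multiHermiteFun_sub α w).aestronglyMeasurable)
    (hK.integrable_mul_multiHermiteFun_sub α v) ?_ (.of_forall fun z w hw => hbound z w hw)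
    ((hK (1 / 8) (by norm_num)).norm.const_mul _) (.of_forall fun z w _ => hderiv z w)
  exact hK.aestronglyMeasurable.smul (continuous_coordForm.comp (continuous_pi fun i =>
    ((continuous_multiHermiteFun _).comp (by fun_prop)).neg)).aestronglyMeasurable

end Convolution

/-! ### Pairing of Hermite functions through a convolution kernel -/

section Pairing

variable {ι : Type*} [Fintype ι] {K : (ι → ℝ) → ℝ}

/-- The trilinear pairing `∬ H^β(v) (H^μ M)(v) K(v - w) (H^ν M)(w) dw dv`. -/
def hermitePairing (K : (ι → ℝ) → ℝ) (β μ ν : ι → ℕ) : ℝ :=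
  ∫ v, multiHermite β v * (multiHermiteFun μ v * hermiteConv K ν v)

theorem integral_integral_rotate (F : (ι → ℝ) → (ι → ℝ) → ℝ) :
    ∫ g : ι → ℝ, ∫ h : ι → ℝ, F ((√2)⁻¹ • (h + g)) (√2 • g) = ∫ z, ∫ v, F v z := by
  have hinner (g : ι → ℝ) : ∫ h : ι → ℝ, F ((√2)⁻¹ • (h + g)) (√2 • g) =
      √2 ^ Module.finrank ℝ (ι → ℝ) • ∫ v, F v (√2 • g) := by
    rw [integral_add_right_eq_self fun h => F ((√2)⁻¹ • h) (√2 • g),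
      Measure.integral_comp_inv_smul_of_nonneg volume (F · (√2 • g)) (by positivity)]
  simp_rw [hinner]
  rw [integral_smul, Measure.integral_comp_smul_of_nonneg volume (fun z => ∫ v, F v z) √2
    (hR := by positivity), smul_inv_smul₀ (by positivity)]

theorem GaussIntegrable.integrable_pairing_integrand (hK : GaussIntegrable K) (β μ ν : ι → ℕ) :
    Integrable (fun x : (ι → ℝ) × (ι → ℝ) =>
      K x.2 * ((multiHermite β x.1 * multiHermiteFun μ x.1) * multiHermiteFun ν (x.1 - x.2)))
      (volume.prod volume) := by
  have hv : (fun x : (ι → ℝ) × (ι → ℝ) => multiHermite β x.1 * multiHermiteFun μ x.1) =O[⊤]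
      fun x => exp (-(5 / 16) * sqNorm x.1) :=
    (isBigO_multiHermite_mul_multiHermiteFun β μ (by norm_num)).comp_tendsto
      (k := Prod.fst) Filter.tendsto_top
  have hmeas : AEStronglyMeasurable (fun x : (ι → ℝ) × (ι → ℝ) =>
      (multiHermite β x.1 * multiHermiteFun μ x.1) * multiHermiteFun ν (x.1 - x.2))
      (volume.prod volume) :=
    ((((continuous_multiHermite β).comp continuous_fst).mul
      ((continuous_multiHermiteFun μ).comp continuous_fst)).mul
      ((continuous_multiHermiteFun ν).comp (by fun_prop))).aestronglyMeasurable
  refine ((isBigO_refl (fun x : (ι → ℝ) × (ι → ℝ) => K x.2) ⊤).mul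
    (hv.mul (isBigO_multiHermiteFun_sub ν))).integrable
    (hK.aestronglyMeasurable.comp_snd.mul hmeas) ?_
  refine ((integrable_exp_neg_mul_sqNorm (c := 1 / 16) (by norm_num)).mul_prod
    (hK (1 / 8) (by norm_num))).congr (.of_forall fun x => ?_)
  beta_reduce
  rw [← mul_assoc (exp _) (exp _), ← exp_add, mul_left_comm (K x.2)]
  ring_nf

theorem GaussIntegrable.hermitePairing_eq_integral_rotate (hK : GaussIntegrable K)
    (β μ ν : ι → ℕ) :
    hermitePairing K β μ ν = ∫ g : ι → ℝ, K (√2 • g) * gaussianDensity g *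
      ∫ h : ι → ℝ, multiHermite β ((√2)⁻¹ • (h + g)) * (multiHermite μ ((√2)⁻¹ • (h + g)) *
        multiHermite ν ((√2)⁻¹ • (h - g))) * gaussianDensity h := by
  have hsub (g h : ι → ℝ) : (√2)⁻¹ • (h + g) - √2 • g = (√2)⁻¹ • (h - g) := by
    ext i
    have hsq : √2 * √2 = 2 := mul_self_sqrt (by norm_num)
    simp only [Pi.sub_apply, Pi.smul_apply, Pi.add_apply, smul_eq_mul]
    field_simp
    linear_combination -(g i) * hsq
  calc hermitePairing K β μ ν
      = ∫ v, ∫ z, K z * ((multiHermite β v * multiHermiteFun μ v) *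
          multiHermiteFun ν (v - z)) := by
        simp_rw [hermitePairing, hermiteConv_apply, ← mul_assoc, ← integral_const_mul]
        refine integral_congr_ae (.of_forall fun v => integral_congr_ae (.of_forall fun z => ?_))
        ring
    _ = ∫ z, ∫ v, K z * ((multiHermite β v * multiHermiteFun μ v) *
          multiHermiteFun ν (v - z)) :=
        integral_integral_swap (hK.integrable_pairing_integrand β μ ν)
    _ = _ := by
        rw [← integral_integral_rotate]
        simp_rw [← integral_const_mul, hsub]
        refine integral_congr_ae (.of_forall fun g => integral_congr_ae (.of_forall fun h => ?_))
        simp only [multiHermiteFun]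
        linear_combination (K (√2 • g) * multiHermite β ((√2)⁻¹ • (h + g)) *
          multiHermite μ ((√2)⁻¹ • (h + g)) * multiHermite ν ((√2)⁻¹ • (h - g))) *
          gaussianDensity_rotate h g

theorem GaussIntegrable.integrable_multiHermite_mul_hermiteConv (hK : GaussIntegrable K)
    (β μ ν : ι → ℕ) :
    Integrable fun v => multiHermite β v * (multiHermiteFun μ v * hermiteConv K ν v) := by
  classical
  have hcont : Continuous (hermiteConv K ν) :=
    continuous_iff_continuousAt.2 fun v => (hK.hasFDerivAt_hermiteConv ν v).continuousAt
  refine (((isBigO_multiHermite_mul_multiHermiteFun β μ (a := 5 / 16) (by norm_num)).mul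
    (hK.isBigO_hermiteConv ν)).congr_left fun v => mul_assoc _ _ _).integrable
    ((continuous_multiHermite β).mul
      ((continuous_multiHermiteFun μ).mul hcont)).aestronglyMeasurable ?_
  refine (integrable_exp_neg_mul_sqNorm (c := 1 / 16) (by norm_num)).congr
    (.of_forall fun v => ?_)
  beta_reduce
  rw [← exp_add]
  ring_nf

variable [DecidableEq ι]

theorem GaussIntegrable.hermitePairing_eq_sum (hK : GaussIntegrable K) (β μ ν : ι → ℕ) :
    hermitePairing K β μ ν = ∑ p ∈ Finset.Iic (β ⊓ (μ + ν)),
      (√2)⁻¹ ^ (∑ i, β i) * ((∏ i, (β i).factorial : ℕ) / (∏ i, ((β - p) i).factorial : ℕ)) *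
        multiRotationCoeff μ ν p *
          ∫ g, K (√2 • g) * (multiHermite (μ + ν - p) g * multiHermiteFun (β - p) g) := by
  have hint (p q : ι → ℕ) :
      Integrable fun g => K (√2 • g) * (multiHermite p g * multiHermiteFun q g) :=
    (hK.comp_smul (by positivity)).integrable_mul
      ((continuous_multiHermite p).mul (continuous_multiHermiteFun q)) (c := 1 / 4) (by norm_num)
      (isBigO_multiHermite_mul_multiHermiteFun p q (by norm_num))
  simp_rw [hK.hermitePairing_eq_integral_rotate, integral_multiHermite_rotate, Finset.mul_sum]
  simp_rw [← integral_const_mul]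
  rw [← integral_finsetSum _ fun p _ => (hint _ _).const_mul _]
  refine integral_congr_ae (.of_forall fun g => Finset.sum_congr rfl fun p _ => ?_)
  simp only [multiHermiteFun]
  ring

theorem GaussIntegrable.hasFDerivAt_multiHermiteFun_mul_hermiteConv (hK : GaussIntegrable K)
    (μ ν : ι → ℕ) (v : ι → ℝ) :
    HasFDerivAt (fun v => multiHermiteFun μ v * hermiteConv K ν v)
      (coordForm fun i => -(multiHermiteFun (μ + Pi.single i 1) v * hermiteConv K ν v +
        multiHermiteFun μ v * hermiteConv K (ν + Pi.single i 1) v)) v := by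
  refine ((hasFDerivAt_multiHermiteFun μ v).mul
    (hK.hasFDerivAt_hermiteConv ν v)).congr_fderiv ?_
  simp_rw [coordForm, Finset.smul_sum, smul_smul, ← Finset.sum_add_distrib, ← add_smul]
  refine Finset.sum_congr rfl fun i _ => ?_
  ring_nf

theorem GaussIntegrable.integrable_multiHermite_mul_fderiv (hK : GaussIntegrable K)
    (α μ ν : ι → ℕ) (i : ι) :
    Integrable fun v => multiHermite α v *
      fderiv ℝ (fun w => multiHermiteFun μ w * hermiteConv K ν w) v (Pi.single i 1) := by
  simp_rw [(hK.hasFDerivAt_multiHermiteFun_mul_hermiteConv μ ν _).fderiv, coordForm_single,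
    mul_neg, mul_add]
  exact ((hK.integrable_multiHermite_mul_hermiteConv α _ ν).add
    (hK.integrable_multiHermite_mul_hermiteConv α μ _)).neg

theorem GaussIntegrable.integral_multiHermite_mul_fderiv (hK : GaussIntegrable K)
    (α μ ν : ι → ℕ) (i : ι) :
    ∫ v, multiHermite α v *
        fderiv ℝ (fun w => multiHermiteFun μ w * hermiteConv K ν w) v (Pi.single i 1) =
      -(α i * hermitePairing K (α - Pi.single i 1) μ ν) := by
  have hfderiv (v : ι → ℝ) : fderiv ℝ (multiHermite α) v (Pi.single i 1) =
      α i * multiHermite (α - Pi.single i 1) v := by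
    rw [(hasFDerivAt_multiHermite α v).fderiv, coordForm_single]
  rw [integral_mul_fderiv_eq_neg_fderiv_mul_of_integrable ?_
    (hK.integrable_multiHermite_mul_fderiv α μ ν i)
    (hK.integrable_multiHermite_mul_hermiteConv α μ ν)
    (fun v _ => (hasFDerivAt_multiHermite α v).differentiableAt)
    fun v _ => (hK.hasFDerivAt_multiHermiteFun_mul_hermiteConv μ ν v).differentiableAt]
  · simp_rw [hfderiv, mul_assoc, integral_const_mul, hermitePairing]
  · simp_rw [hfderiv, mul_assoc]
    exact (hK.integrable_multiHermite_mul_hermiteConv _ μ ν).const_mul _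

end Pairing

/-! ### Weak form of the collision flux -/

section Flux

variable {ι : Type*} [Fintype ι] [DecidableEq ι] {A : (ι → ℝ) → ι → ι → ℝ}

/-- The `i`-th component of the bilinear collision flux
`∫ A(v - w) (f(w) ∇_v h(v) - f(v) ∇_w h(w)) dw` for `f = H^μ M` and `h = H^ν M`. -/
def hermiteFlux (A : (ι → ℝ) → ι → ι → ℝ) (μ ν : ι → ℕ) (v : ι → ℝ) (i : ι) : ℝ :=
  ∫ w, ∑ j, A (v - w) i j *
    (multiHermiteFun μ w * fderiv ℝ (multiHermiteFun ν) v (Pi.single j 1) -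
      multiHermiteFun μ v * fderiv ℝ (multiHermiteFun ν) w (Pi.single j 1))

theorem hermiteFlux_eq_sum_hermiteConv (hA : ∀ i j, GaussIntegrable fun z => A z i j)
    (μ ν : ι → ℕ) (v : ι → ℝ) (i : ι) :
    hermiteFlux A μ ν v i = ∑ j,
      (multiHermiteFun μ v * hermiteConv (fun z => A z i j) (ν + Pi.single j 1) v -
        multiHermiteFun (ν + Pi.single j 1) v * hermiteConv (fun z => A z i j) μ v) := by
  have hint (j : ι) (α : ι → ℕ) (c : ℝ) :
      Integrable fun w => c * (A (v - w) i j * multiHermiteFun α w) := by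
    have hsub := ((hA i j).integrable_mul_multiHermiteFun_sub α v).comp_sub_left v
    simpa only [sub_sub_cancel] using hsub.const_mul c
  have hexpand (w : ι → ℝ) (j : ι) : A (v - w) i j *
      (multiHermiteFun μ w * fderiv ℝ (multiHermiteFun ν) v (Pi.single j 1) -
        multiHermiteFun μ v * fderiv ℝ (multiHermiteFun ν) w (Pi.single j 1)) =
      multiHermiteFun μ v * (A (v - w) i j * multiHermiteFun (ν + Pi.single j 1) w) -
        multiHermiteFun (ν + Pi.single j 1) v * (A (v - w) i j * multiHermiteFun μ w) := by
    simp only [(hasFDerivAt_multiHermiteFun ν _).fderiv, coordForm_single]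
    ring
  simp_rw [hermiteFlux, hexpand]
  refine (integral_finsetSum _ fun j _ => (hint j _ _).sub (hint j _ _)).trans ?_
  refine Finset.sum_congr rfl fun j _ => ?_
  rw [integral_sub' (hint j _ _) (hint j _ _)]
  simp_rw [integral_const_mul, hermiteConv_apply_swap]

theorem integral_multiHermite_mul_div_hermiteFlux
    (hA : ∀ i j, GaussIntegrable fun z => A z i j) (α μ ν : ι → ℕ) :
    ∫ v, multiHermite α v *
        ∑ s, fderiv ℝ (fun w => hermiteFlux A μ ν w s) v (Pi.single s 1) =
      ∑ s, ∑ t, α s *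
        (hermitePairing (fun z => A z s t) (α - Pi.single s 1) (ν + Pi.single t 1) μ -
          hermitePairing (fun z => A z s t) (α - Pi.single s 1) μ (ν + Pi.single t 1)) := by
  have hdiff (s t : ι) (μ ν : ι → ℕ) (v : ι → ℝ) : DifferentiableAt ℝ
      (fun w => multiHermiteFun μ w * hermiteConv (fun z => A z s t) ν w) v :=
    ((hA s t).hasFDerivAt_multiHermiteFun_mul_hermiteConv μ ν v).differentiableAt
  have hint (s t : ι) := ((hA s t).integrable_multiHermite_mul_fderiv α μ (ν + Pi.single t 1) s).sub
    ((hA s t).integrable_multiHermite_mul_fderiv α (ν + Pi.single t 1) μ s)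
  simp_rw [hermiteFlux_eq_sum_hermiteConv hA]
  simp_rw [fderiv_fun_sum fun _ _ => (hdiff _ _ _ _ _).fun_sub (hdiff _ _ _ _ _),
    fderiv_fun_sub (hdiff _ _ _ _ _) (hdiff _ _ _ _ _), sum_apply, sub_apply, Finset.mul_sum,
    mul_sub]
  refine (integral_finsetSum _ fun s _ => integrable_finsetSum _ fun t _ => hint s t).trans ?_
  refine Finset.sum_congr rfl fun s _ => ?_
  refine (integral_finsetSum _ fun t _ => hint s t).trans ?_
  refine Finset.sum_congr rfl fun t _ => ?_
  rw [integral_sub' ((hA s t).integrable_multiHermite_mul_fderiv ..)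
    ((hA s t).integrable_multiHermite_mul_fderiv ..),
    (hA s t).integral_multiHermite_mul_fderiv, (hA s t).integral_multiHermite_mul_fderiv]
  ring

end Flux

/-! ### The Landau kernel -/

section PowerKernel

variable {ι : Type*} [Fintype ι]

/-- The kernel `|z|^γ z_s z_t`, of which the entries of the Landau kernel are combinations. -/
def powerKernel (γ : ℝ) (s t : ι) (z : ι → ℝ) : ℝ := √(sqNorm z) ^ γ * z s * z t

theorem integrable_rpow_sqrt_sqNorm_mul_exp [Nonempty ι] {b c : ℝ}
    (hb : -(Fintype.card ι : ℝ) < b) (hc : 0 < c) :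
    Integrable fun z : ι → ℝ => √(sqNorm z) ^ b * exp (-c * sqNorm z) := by
  have hradial : Integrable fun x : EuclideanSpace ℝ ι => ‖x‖ ^ b * exp (-c * ‖x‖ ^ 2) := by
    refine (integrable_fun_norm_addHaar volume (f := fun r => r ^ b * exp (-c * r ^ 2))).2 ?_
    refine (integrableOn_rpow_mul_exp_neg_mul_sq hc
      (s := Fintype.card ι - 1 + b) (by linarith)).congr_fun (fun r hr => ?_) measurableSet_Ioi
    beta_reduce
    rw [finrank_euclideanSpace, smul_eq_mul, ← mul_assoc,
      ← rpow_natCast r (Fintype.card ι - 1), Nat.cast_pred Fintype.card_pos, rpow_add hr]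
  refine ((PiLp.volume_preserving_toLp ι).integrable_comp_of_integrable hradial).congr
    (.of_forall fun z => ?_)
  have hnorm : ‖WithLp.toLp 2 z‖ = √(sqNorm z) := by
    simp only [EuclideanSpace.norm_eq, norm_eq_abs, sq_abs, sqNorm]
  rw [Function.comp_apply, hnorm, sq_sqrt (sqNorm_nonneg z)]

theorem abs_powerKernel_le (γ : ℝ) (s t : ι) (z : ι → ℝ) :
    |powerKernel γ s t z| ≤ √(sqNorm z) ^ (γ + 2) := by
  have hcoord (i : ι) : |z i| ≤ √(sqNorm z) :=
    abs_le_sqrt (Finset.single_le_sum (f := fun j => z j ^ 2) (fun _ _ => sq_nonneg _)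
      (Finset.mem_univ i))
  rcases (sqrt_nonneg (sqNorm z)).eq_or_lt with h0 | hpos
  · have hs : z s = 0 := abs_nonpos_iff.1 (h0 ▸ hcoord s)
    simpa [powerKernel, hs] using by positivity
  · rw [powerKernel, mul_assoc, abs_mul, abs_mul, abs_of_pos (rpow_pos_of_pos hpos γ),
      rpow_add hpos, rpow_two, sq]
    gcongr <;> exact hcoord _

theorem gaussIntegrable_powerKernel {γ : ℝ} (hγ : -(Fintype.card ι : ℝ) < γ + 2) (s t : ι) :
    GaussIntegrable (powerKernel γ s t) := by
  intro c hc
  have : Nonempty ι := ⟨s⟩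
  have hmeas : Measurable (powerKernel γ s t) :=
    ((continuous_sqNorm.measurable.sqrt.pow_const γ).mul (measurable_pi_apply s)).mul
      (measurable_pi_apply t)
  refine (integrable_rpow_sqrt_sqNorm_mul_exp hγ hc).mono
    (hmeas.aestronglyMeasurable.mul
      (continuous_sqNorm.const_mul (-c)).rexp.aestronglyMeasurable) (.of_forall fun z => ?_)
  rw [norm_mul, norm_mul]
  gcongr
  exact (abs_powerKernel_le γ s t z).trans (le_abs_self _)

theorem powerKernel_smul {R : ℝ} (hR : 0 < R) (γ : ℝ) (s t : ι) (z : ι → ℝ) :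
    powerKernel γ s t (R • z) = R ^ (γ + 2) * powerKernel γ s t z := by
  simp only [powerKernel, sqNorm_smul, Pi.smul_apply, smul_eq_mul]
  rw [sqrt_mul (sq_nonneg R), sqrt_sq hR.le, mul_rpow hR.le (sqrt_nonneg _), rpow_add hR, rpow_two]
  ring

end PowerKernel

theorem Aker_eq_powerKernel (Λ γ : ℝ) {z : V3} (hz : z ≠ 0) (s t : Fin 3) :
    Aker Λ γ z s t =
      Λ * (-powerKernel γ s t z + (if s = t then 1 else 0) * ∑ r, powerKernel γ r r z) := by
  have hsq : nrm z ^ 2 = sqNorm z := sq_sqrt (sqNorm_nonneg z)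
  have hpos : 0 < nrm z := by
    obtain ⟨i, hi⟩ := Function.ne_iff.1 hz
    exact sqrt_pos.2 (Finset.sum_pos' (fun _ _ => sq_nonneg _)
      ⟨i, Finset.mem_univ i, sq_pos_of_ne_zero hi⟩)
  have htrace : ∑ r, powerKernel γ r r z = nrm z ^ γ * nrm z ^ 2 := by
    simp_rw [hsq, powerKernel, mul_assoc, ← sq, ← Finset.mul_sum]
    rfl
  rw [htrace, Aker, rpow_add hpos, rpow_two, powerKernel, show √(sqNorm z) = nrm z from rfl]
  field_simp
  ring

theorem Aker_ae_eq_powerKernel (Λ γ : ℝ) (s t : Fin 3) :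
    (fun z => Aker Λ γ z s t) =ᵐ[volume] fun z =>
      Λ * (-powerKernel γ s t z + (if s = t then 1 else 0) * ∑ r, powerKernel γ r r z) :=
  (Measure.ae_ne volume (0 : V3)).mono fun _ hz => Aker_eq_powerKernel Λ γ hz s t

theorem gaussIntegrable_Aker (Λ : ℝ) {γ : ℝ} (hγ : -5 < γ) (s t : Fin 3) :
    GaussIntegrable fun z => Aker Λ γ z s t := by
  intro c hc
  have hint (s t : Fin 3) := gaussIntegrable_powerKernel (γ := γ)
    (by rw [Fintype.card_fin]; norm_num; linarith) s t c hc
  refine (((hint s t).neg.add ((integrable_finsetSum Finset.univ fun r _ => hint r r).const_mul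
    (if s = t then 1 else 0))).const_mul Λ).congr ?_
  filter_upwards [Aker_ae_eq_powerKernel Λ γ s t] with z hz
  rw [hz, Pi.add_apply, Pi.neg_apply, ← Finset.sum_mul]
  ring

theorem Mxw_eq_gaussianDensity : Mxw = gaussianDensity := by
  ext v
  have hconst : (2 * π) ^ (-(3 : ℝ) / 2) = (√(2 * π))⁻¹ ^ 3 := by
    rw [← sqrt_inv, sqrt_eq_rpow, ← rpow_mul_natCast (by positivity), inv_rpow (by positivity),
      ← rpow_neg (by positivity)]
    norm_num
  simp only [gaussianDensity, gaussianPDFReal_zero_one, Finset.prod_mul_distrib,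
    Finset.prod_const, ← exp_sum]
  rw [Mxw, hconst, Finset.card_univ, Fintype.card_fin, neg_div, Finset.sum_div,
    Finset.sum_neg_distrib]

theorem Herm_eq_multiHermite (α : Fin 3 → ℕ) : Herm α = multiHermite α := by
  ext v
  have hMxw (x y z : ℝ) : Mxw ![x, y, z] =
      gaussianPDFReal 0 1 x * (gaussianPDFReal 0 1 y * gaussianPDFReal 0 1 z) := by
    simp [Mxw_eq_gaussianDensity, gaussianDensity, Fin.prod_univ_three, mul_assoc]
  have hne (x : ℝ) : gaussianPDFReal 0 1 x ≠ 0 := (gaussianPDFReal_pos 0 1 x one_ne_zero).ne'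
  have hsign (n : ℕ) : (-1 : ℝ) ^ n * (-1) ^ n = 1 := by rw [← mul_pow]; norm_num
  have hfactor (n : ℕ) (x : ℝ) :
      (-1) ^ n / gaussianPDFReal 0 1 x * iteratedDeriv n (gaussianPDFReal 0 1) x =
        hermiteEval n x := by
    simp only [iteratedDeriv_gaussianPDFReal_zero_one, hermiteFun]
    field_simp [hne x]
    linear_combination hermiteEval n x * hsign n
  simp only [Herm, hMxw, iteratedDeriv_const_mul_field, iteratedDeriv_mul_const_field]
  rw [multiHermite, Fin.prod_univ_three, ← hfactor, ← hfactor, ← hfactor, degIdx,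
    Mxw_eq_gaussianDensity, gaussianDensity, Fin.prod_univ_three]
  ring

theorem degIdx_eq_sum (α : Fin 3 → ℕ) : degIdx α = ∑ i, α i :=
  (Fin.sum_univ_three α).symm

theorem multiFact_eq_prod (α : Fin 3 → ℕ) : multiFact α = ∏ i, (α i).factorial :=
  (Fin.prod_univ_three fun i => (α i).factorial).symm

theorem aMulti_eq_multiRotationCoeff {μ ν p : Fin 3 → ℕ} (hp : p ≤ μ + ν) :
    aMulti p (μ + ν - p) μ ν = multiRotationCoeff μ ν p :=
  Finset.prod_congr rfl fun i _ => aCoe_eq_rotationCoeff (hp i)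

theorem Gst_eq_integral_powerKernel (γ : ℝ) (s t : Fin 3) (p q : Fin 3 → ℕ) :
    Gst γ s t p q = ∫ g, powerKernel γ s t g * (multiHermite p g * multiHermiteFun q g) := by
  simp_rw [Gst, Herm_eq_multiHermite, Mxw_eq_gaussianDensity, multiHermiteFun, powerKernel,
    mul_assoc]
  rfl

theorem integral_Aker_sqrt_two_smul (Λ : ℝ) {γ : ℝ} (hγ : -5 < γ) (s t : Fin 3)
    (p q : Fin 3 → ℕ) :
    ∫ g : V3, Aker Λ γ (√2 • g) s t * (multiHermite p g * multiHermiteFun q g) =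
      2 ^ ((γ + 2) / 2) * Λ * Bcoe γ s t p q := by
  have hscale : √2 ^ (γ + 2) = (2 : ℝ) ^ ((γ + 2) / 2) := by
    rw [sqrt_eq_rpow, ← rpow_mul zero_le_two]
    ring_nf
  have hint (s t : Fin 3) : Integrable fun g : V3 =>
      powerKernel γ s t g * (multiHermite p g * multiHermiteFun q g) :=
    (gaussIntegrable_powerKernel (by rw [Fintype.card_fin]; norm_num; linarith) s t).integrable_mul
      ((continuous_multiHermite p).mul (continuous_multiHermiteFun q)) (c := 1 / 4) (by norm_num)
      (isBigO_multiHermite_mul_multiHermiteFun p q (by norm_num))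
  have hkernel : ∀ᵐ g : V3, Aker Λ γ (√2 • g) s t * (multiHermite p g * multiHermiteFun q g) =
      2 ^ ((γ + 2) / 2) * Λ *
        (-(powerKernel γ s t g * (multiHermite p g * multiHermiteFun q g)) +
          (if s = t then 1 else 0) *
            ∑ r, powerKernel γ r r g * (multiHermite p g * multiHermiteFun q g)) := by
    filter_upwards [Measure.ae_ne volume (0 : V3)] with g hg
    rw [Aker_eq_powerKernel Λ γ (smul_ne_zero (by positivity) hg)]
    simp_rw [powerKernel_smul (sqrt_pos.2 two_pos), hscale, ← Finset.mul_sum, ← Finset.sum_mul]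
    ring
  rw [integral_congr_ae hkernel, integral_const_mul,
    integral_add (hint s t).fun_neg ((integrable_finsetSum _ fun r _ => hint r r).const_mul _),
    integral_neg, integral_const_mul, integral_finsetSum _ fun r _ => hint r r]
  simp_rw [← Gst_eq_integral_powerKernel, Bcoe]

theorem coeA_eq_sum_hermitePairing (Λ : ℝ) {γ : ℝ} (hγ : -5 < γ) (α lam kap : Fin 3 → ℕ) :
    coeA Λ γ α lam kap = (1 / (multiFact α : ℝ)) * ∑ s, ∑ t, α s *
      (hermitePairing (fun z => Aker Λ γ z s t) (α - Pi.single s 1) (kap + Pi.single t 1) lam -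
        hermitePairing (fun z => Aker Λ γ z s t) (α - Pi.single s 1) lam
          (kap + Pi.single t 1)) := by
  rw [← integral_multiHermite_mul_div_hermiteFlux (gaussIntegrable_Aker Λ hγ)]
  simp_rw [coeA, Herm_eq_multiHermite, Mxw_eq_gaussianDensity]
  rfl

theorem hermitePairing_Aker (Λ : ℝ) {γ : ℝ} (hγ : -5 < γ) (s t : Fin 3) (β μ ν : Fin 3 → ℕ) :
    hermitePairing (fun z => Aker Λ γ z s t) β μ ν =
      2 ^ ((γ + 2 - degIdx β) / 2) * multiFact β * ∑ p ∈ Finset.Iic (β ⊓ (μ + ν)),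
        Λ / multiFact (β - p) * aMulti p (μ + ν - p) μ ν * Bcoe γ s t (μ + ν - p) (β - p) := by
  have hpow : (2 : ℝ) ^ ((γ + 2 - degIdx β) / 2) = (√2)⁻¹ ^ degIdx β * 2 ^ ((γ + 2) / 2) := by
    rw [← sqrt_inv, sqrt_eq_rpow, ← rpow_mul_natCast (by positivity), inv_rpow (by positivity),
      ← rpow_neg (by positivity), ← rpow_add two_pos]
    ring_nf
  rw [(gaussIntegrable_Aker Λ hγ s t).hermitePairing_eq_sum, hpow, Finset.mul_sum]
  refine Finset.sum_congr rfl fun p hp => ?_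
  rw [integral_Aker_sqrt_two_smul Λ hγ, ← degIdx_eq_sum, ← multiFact_eq_prod, ← multiFact_eq_prod,
    aMulti_eq_multiRotationCoeff ((Finset.mem_Iic.1 hp).trans inf_le_right)]
  ring

/-! ### Multi-index sums -/

theorem degIdx_mono : Monotone degIdx := fun α β h => by
  simpa only [degIdx_eq_sum] using Finset.sum_le_sum fun i _ => h i

theorem mem_idxLt {n : ℕ} {p : Fin 3 → ℕ} : p ∈ idxLt n ↔ degIdx p < n := by
  simp only [idxLt, Finset.mem_filter, Fintype.mem_piFinset, Finset.mem_range,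
    and_iff_right_iff_imp, degIdx_eq_sum]
  exact fun h i => (Finset.single_le_sum (fun _ _ => zero_le) (Finset.mem_univ i)).trans_lt h

theorem single_one_le_iff {ι : Type*} [DecidableEq ι] {α : ι → ℕ} {s : ι} :
    Pi.single s 1 ≤ α ↔ α s ≠ 0 := by
  simp [Pi.single, update_le_iff, Nat.one_le_iff_ne_zero]

section SubSingle

variable {α : Fin 3 → ℕ} {s : Fin 3}

theorem degIdx_sub_single (hs : α s ≠ 0) : degIdx (α - Pi.single s 1) + 1 = degIdx α := by
  conv_rhs => rw [← tsub_add_cancel_of_le (single_one_le_iff.2 hs)]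
  simp [degIdx_eq_sum, Finset.sum_add_distrib]

theorem multiFact_sub_single (hs : α s ≠ 0) :
    α s * multiFact (α - Pi.single s 1) = multiFact α := by
  obtain ⟨β, rfl⟩ := exists_add_of_le (single_one_le_iff.2 hs)
  rw [add_tsub_cancel_left]
  fin_cases s <;> simp [multiFact, Nat.factorial_succ, add_comm 1] <;> ring

theorem filter_idxLt (hs : α s ≠ 0) (σ : Fin 3 → ℕ) :
    (idxLt (degIdx α)).filter (fun p => Pi.single s 1 + p ≤ α ∧ p ≤ σ) =
      Finset.Iic ((α - Pi.single s 1) ⊓ σ) := by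
  ext p
  rw [Finset.mem_filter, mem_idxLt, Finset.mem_Iic, le_inf_iff,
    le_tsub_iff_left (single_one_le_iff.2 hs), and_iff_right_iff_imp]
  intro h
  have hdeg := degIdx_mono ((le_tsub_iff_left (single_one_le_iff.2 hs)).2 h.1)
  have := degIdx_sub_single hs
  omega

end SubSingle

theorem inv_multiFact_mul_hermitePairing_sub (Λ : ℝ) {γ : ℝ} (hγ : -5 < γ)
    (α μ ν : Fin 3 → ℕ) (s t : Fin 3) :
    1 / multiFact α * (α s *
      (hermitePairing (fun z => Aker Λ γ z s t) (α - Pi.single s 1) μ ν -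
        hermitePairing (fun z => Aker Λ γ z s t) (α - Pi.single s 1) ν μ)) =
    2 ^ ((γ + 3 - degIdx α) / 2) * ∑ p ∈ idxLt (degIdx α),
      if Pi.single s 1 + p ≤ α ∧ p ≤ μ + ν then
        Λ / multiFact (α - Pi.single s 1 - p) *
          (aMulti p (μ + ν - p) μ ν - aMulti p (μ + ν - p) ν μ) *
          Bcoe γ s t (μ + ν - p) (α - Pi.single s 1 - p)
      else 0 := by
  rw [← Finset.sum_filter]
  by_cases hs : α s = 0
  · rw [Finset.filter_false_of_mem fun p _ h =>
      single_one_le_iff.1 ((le_add_right le_rfl).trans h.1) hs]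
    simp [hs]
  · have hfact : (multiFact α : ℝ) = α s * multiFact (α - Pi.single s 1) := by
      rw [← multiFact_sub_single hs, Nat.cast_mul]
    have hne : (multiFact α : ℝ) ≠ 0 := by unfold multiFact; positivity
    have hdeg : γ + 3 - degIdx α = γ + 2 - degIdx (α - Pi.single s 1) := by
      rw [← degIdx_sub_single hs]
      push_cast
      ring
    rw [filter_idxLt hs, hermitePairing_Aker Λ hγ, hermitePairing_Aker Λ hγ, add_comm ν μ,
      ← mul_sub, ← Finset.sum_sub_distrib, hdeg, one_div_mul_eq_div, div_eq_iff hne, hfact]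
    simp_rw [← sub_mul, ← mul_sub]
    ring

/-- explicit formula for the expansion coefficients A_α^{λ,κ}
of the quadratic FPL collision operator, for γ > -5. -/
theorem coeA_eq_explicit (Λ γ : ℝ) (hΛ : 0 < Λ) (hγ : γ > -5) (α lam kap : Fin 3 → ℕ) :
    coeA Λ γ α lam kap =
      (2 : ℝ) ^ ((γ + 3 - (degIdx α : ℝ)) / 2) *
        ∑ s : Fin 3, ∑ t : Fin 3, ∑ p ∈ idxLt (degIdx α),
          if Pi.single s 1 + p ≤ α ∧ p ≤ lam + kap + Pi.single t 1 then
            (Λ / (multiFact (α - Pi.single s 1 - p) : ℝ)) *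
              (aMulti p (lam + kap + Pi.single t 1 - p) (kap + Pi.single t 1) lam -
                aMulti p (lam + kap + Pi.single t 1 - p) lam (kap + Pi.single t 1)) *
              Bcoe γ s t (lam + kap + Pi.single t 1 - p) (α - Pi.single s 1 - p)
          else 0 := by
  rw [coeA_eq_sum_hermitePairing Λ hγ, Finset.mul_sum, Finset.mul_sum]
  refine Finset.sum_congr rfl fun s _ => ?_
  rw [Finset.mul_sum, Finset.mul_sum]
  refine Finset.sum_congr rfl fun t _ => ?_
  have hcomm : kap + Pi.single t 1 + lam = lam + kap + Pi.single t 1 := by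
    rw [add_comm, add_assoc]
  simp only [inv_multiFact_mul_hermitePairing_sub Λ hγ, hcomm]
end
end

section
/- For all integers l₁, l₂ ≥ 0 and m₁ ∈ {−l₁,…,l₁}, m₂ ∈ {−l₂,…,l₂}, the spherical-surface integral F_{33}(l₁, m₁, l₂, m₂) = ∫_{S²} n₃² Y_{l₁}^{m₁}(n) Y_{l₂}^{m₂}(n) dn satisfies F_{33}(l₁, m₁, l₂, m₂) = (−1)^{m₂} Σ_{k,j ∈ {0,1}} η_{δ_{0k}+(−1)^k l₂, m₂}^{0} · η_{(−1)^j l₁ + δ_{0j}, m₁}^{0} · δ_{l₁+δ_{1k}−δ_{1j}, l₂−δ_{1k}+δ_{1j}} · δ_{m₁, −m₂}, where n₃ is the third component of the unit vector n and δ denotes the Kronecker delta. -/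
open MeasureTheory Real
open scoped BigOperators Classical

noncomputable section

/-!
Multiplication by `n₃ = cos θ` acts on spherical harmonics as a ladder operator,
`n₃ Y_l^m = η_{l+1,m}^0 Y_{l+1}^m + η_{l,m}^0 Y_{l-1}^m`: this is the three-term recurrence for the
derivatives of `(X² - 1)^l / (2^l l!)`, combined with the ratios of consecutive normalization
constants. Writing `n₃² Y Y' = (n₃ Y)(n₃ Y')` and expanding both factors leaves four products of
harmonics. Their azimuthal integrals force `m₁ = -m₂`; then integration by parts moves derivatives
between the two factors and reduces the polar integrals to the orthogonality of the Legendre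
polynomials.
-/

section Legendre

open Polynomial

/-- The linear functional `p ↦ ∫ x in a..b, p x` on polynomials, packaged so that linearity needs no
integrability side conditions. -/
def polyIntegral (a b : ℝ) : ℝ[X] →ₗ[ℝ] ℝ where
  toFun p := ∫ x in a..b, p.eval x
  map_add' p q := by
    simp only [eval_add]
    exact intervalIntegral.integral_add (p.continuous.intervalIntegrable a b)
      (q.continuous.intervalIntegrable a b)
  map_smul' c p := by simp

theorem polyIntegral_apply (a b : ℝ) (p : ℝ[X]) : polyIntegral a b p = ∫ x in a..b, p.eval x :=
  rfl

theorem polyIntegral_C_mul (a b c : ℝ) (p : ℝ[X]) :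
    polyIntegral a b (C c * p) = c * polyIntegral a b p := by
  rw [← smul_eq_C_mul, map_smul, smul_eq_mul]

theorem polyIntegral_derivative (a b : ℝ) (p : ℝ[X]) :
    polyIntegral a b (derivative p) = p.eval b - p.eval a :=
  intervalIntegral.integral_eq_sub_of_hasDerivAt (fun x _ => p.hasDerivAt x)
    ((derivative p).continuous.intervalIntegrable a b)

theorem polyIntegral_iterate_derivative_mul {a b : ℝ} (n : ℕ) (p : ℝ[X]) {q : ℝ[X]}
    (ha : ∀ j < n, (derivative^[j] q).eval a = 0) (hb : ∀ j < n, (derivative^[j] q).eval b = 0) :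
    polyIntegral a b (derivative^[n] p * q) =
      (-1) ^ n * polyIntegral a b (p * derivative^[n] q) := by
  induction n generalizing p with
  | zero => simp
  | succ n ih =>
    have boundary := polyIntegral_derivative a b (p * derivative^[n] q)
    rw [derivative_mul, map_add, eval_mul, eval_mul, ha n n.lt_succ_self, hb n n.lt_succ_self,
      mul_zero, mul_zero, sub_zero] at boundary
    rw [Function.iterate_succ_apply, Function.iterate_succ_apply',
      ih (derivative p) (fun j hj => ha j (hj.trans n.lt_succ_self))
        (fun j hj => hb j (hj.trans n.lt_succ_self)), pow_succ]
    linear_combination (-1) ^ n * boundary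

/-- The polynomial `(X² - 1)^l / (2^l l!)` of Rodrigues' formula: its `l`-th derivative is the
Legendre polynomial `P_l`, and its `(l + m)`-th derivative is the polynomial factor of `P_l^m`. -/
def rodrigues (l : ℕ) : ℝ[X] := C (1 / (2 ^ l * (l.factorial : ℝ))) * (X ^ 2 - 1) ^ l

theorem rodrigues_zero : rodrigues 0 = 1 := by simp [rodrigues]

theorem two_mul_succ_mul_rodrigues_succ (l : ℕ) :
    C (2 * (l + 1) : ℝ) * rodrigues (l + 1) = (X ^ 2 - 1) * rodrigues l := by
  have hcoeff : 2 * (l + 1) * (1 / (2 ^ (l + 1) * ((l + 1).factorial : ℝ))) =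
      1 / (2 ^ l * (l.factorial : ℝ)) := by
    rw [Nat.factorial_succ]
    push_cast
    field_simp
    ring
  rw [rodrigues, rodrigues, ← mul_assoc, ← C_mul, hcoeff]
  ring

theorem derivative_rodrigues_succ (l : ℕ) :
    derivative (rodrigues (l + 1)) = X * rodrigues l := by
  have hne (l : ℕ) : C (2 * (l + 1) : ℝ) ≠ 0 := C_ne_zero.mpr (by positivity)
  induction l with
  | zero =>
    have h := congrArg derivative (two_mul_succ_mul_rodrigues_succ 0)
    refine mul_left_cancel₀ (hne 0) ?_
    rw [← derivative_C_mul, h, rodrigues_zero]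
    simp [one_add_one_eq_two, C_ofNat]
  | succ l ih =>
    have h := congrArg derivative (two_mul_succ_mul_rodrigues_succ (l + 1))
    rw [derivative_C_mul, derivative_mul, ih] at h
    refine mul_left_cancel₀ (hne (l + 1)) (h.trans ?_)
    have h' := two_mul_succ_mul_rodrigues_succ l
    simp only [map_mul, map_add, map_one, map_natCast, C_ofNat, derivative_sub, derivative_X_pow,
      derivative_one, Nat.cast_add, Nat.cast_one, Nat.cast_ofNat] at h' ⊢
    linear_combination -X * h'

theorem natDegree_rodrigues_le (l : ℕ) : (rodrigues l).natDegree ≤ 2 * l := by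
  have h : (X ^ 2 - 1 : ℝ[X]).natDegree ≤ 2 := by compute_degree
  calc (rodrigues l).natDegree ≤ ((X ^ 2 - 1 : ℝ[X]) ^ l).natDegree := natDegree_C_mul_le _ _
    _ ≤ 2 * l := (natDegree_pow_le_of_le l h).trans_eq (mul_comm l 2)

theorem iterate_derivative_rodrigues_eq_zero {l a : ℕ} (h : 2 * l < a) :
    derivative^[a] (rodrigues l) = 0 :=
  iterate_derivative_eq_zero ((natDegree_rodrigues_le l).trans_lt h)

theorem eval_iterate_derivative_rodrigues_eq_zero {l j : ℕ} (h : j < l) {x : ℝ} (hx : x ^ 2 = 1) :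
    (derivative^[j] (rodrigues l)).eval x = 0 := by
  obtain ⟨r, hr⟩ := pow_sub_dvd_iterate_derivative_pow (X ^ 2 - 1 : ℝ[X]) l j
  rw [rodrigues, iterate_derivative_C_mul, hr]
  simp [hx, Nat.sub_ne_zero_of_lt h]

theorem iterate_derivative_succ_rodrigues_succ (l a : ℕ) :
    derivative^[a + 1] (rodrigues (l + 1)) =
      X * derivative^[a] (rodrigues l) + C (a : ℝ) * derivative^[a - 1] (rodrigues l) := by
  rw [Function.iterate_succ_apply, derivative_rodrigues_succ, mul_comm X, iterate_derivative_mul_X,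
    nsmul_eq_mul, map_natCast, mul_comm X]

theorem X_mul_iterate_derivative_succ_rodrigues_succ (l a : ℕ) :
    X * derivative^[a + 1] (rodrigues (l + 1)) =
      C (2 * l + 2 - a : ℝ) * derivative^[a] (rodrigues (l + 1)) +
        derivative^[a] (rodrigues l) := by
  have euler : derivative (rodrigues (l + 1)) * X =
      C (2 * (l + 1) : ℝ) * rodrigues (l + 1) + rodrigues l := by
    rw [derivative_rodrigues_succ, two_mul_succ_mul_rodrigues_succ]
    ring
  have h := congrArg (derivative^[a]) euler
  rw [iterate_derivative_derivative_mul_X, iterate_map_add, iterate_derivative_C_mul] at h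
  simp only [nsmul_eq_mul, map_mul, map_add, map_sub, map_one, map_natCast, C_ofNat] at h ⊢
  linear_combination h

theorem X_mul_iterate_derivative_rodrigues {l a : ℕ} (h : a ≤ 2 * l) :
    C (2 * l + 1 : ℝ) * (X * derivative^[a] (rodrigues l)) =
      C (2 * l + 1 - a : ℝ) * derivative^[a + 1] (rodrigues (l + 1)) +
        C (a : ℝ) * derivative^[a - 1] (rodrigues (l - 1)) := by
  rw [iterate_derivative_succ_rodrigues_succ]
  rcases a with _ | a
  · simp
  · obtain ⟨l, rfl⟩ : ∃ k, l = k + 1 := ⟨l - 1, by omega⟩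
    have hX := X_mul_iterate_derivative_succ_rodrigues_succ l a
    simp only [Nat.add_sub_cancel, map_mul, map_add, map_sub, map_one, map_natCast, C_ofNat,
      Nat.cast_add, Nat.cast_one] at hX ⊢
    linear_combination ((a : ℝ[X]) + 1) * hX

theorem eval_legendre_sq (l : ℕ) {x : ℝ} (hx : x ^ 2 = 1) :
    (derivative^[l] (rodrigues l)).eval x ^ 2 = 1 := by
  induction l with
  | zero => simp [rodrigues_zero]
  | succ l ih =>
    have hlower : (l : ℝ) * (derivative^[l - 1] (rodrigues l)).eval x = 0 := by
      rcases l.eq_zero_or_pos with rfl | hl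
      · simp
      · rw [eval_iterate_derivative_rodrigues_eq_zero (Nat.sub_lt hl one_pos) hx, mul_zero]
    rw [iterate_derivative_succ_rodrigues_succ, eval_add, eval_mul, eval_mul, eval_C, hlower,
      add_zero, eval_X, mul_pow, hx, ih, mul_one]

theorem polyIntegral_mul_legendre_eq_zero {p : ℝ[X]} {k : ℕ} (h : p.natDegree < k) :
    polyIntegral (-1) 1 (p * derivative^[k] (rodrigues k)) = 0 := by
  have byParts := polyIntegral_iterate_derivative_mul (a := -1) (b := 1) k p (q := rodrigues k)
    (fun j hj => eval_iterate_derivative_rodrigues_eq_zero hj (by norm_num))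
    (fun j hj => eval_iterate_derivative_rodrigues_eq_zero hj (by norm_num))
  rw [iterate_derivative_eq_zero h, zero_mul, map_zero] at byParts
  exact (mul_eq_zero.mp byParts.symm).resolve_left (pow_ne_zero k (by norm_num))

theorem natDegree_iterate_derivative_rodrigues_le (l a : ℕ) :
    (derivative^[a] (rodrigues l)).natDegree ≤ 2 * l - a :=
  (natDegree_iterate_derivative _ a).trans (Nat.sub_le_sub_right (natDegree_rodrigues_le l) a)

theorem polyIntegral_legendre_mul_legendre_of_ne {l k : ℕ} (h : l ≠ k) :
    polyIntegral (-1) 1 (derivative^[l] (rodrigues l) * derivative^[k] (rodrigues k)) = 0 := by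
  wlog hlt : l < k generalizing l k
  · rw [mul_comm]
    exact this h.symm (by omega)
  · exact polyIntegral_mul_legendre_eq_zero
      ((natDegree_iterate_derivative_rodrigues_le l l).trans_lt (by omega))

theorem polyIntegral_X_mul_derivative_legendre_mul_legendre (l : ℕ) :
    polyIntegral (-1) 1
        (X * derivative^[l + 1] (rodrigues l) * derivative^[l] (rodrigues l)) =
      l * polyIntegral (-1) 1 (derivative^[l] (rodrigues l) ^ 2) := by
  rcases l with _ | l
  · simp [rodrigues_zero]
  · have hdeg : (derivative^[l + 1] (rodrigues l)).natDegree < l + 1 :=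
      (natDegree_iterate_derivative_rodrigues_le l (l + 1)).trans_lt (by omega)
    rw [X_mul_iterate_derivative_succ_rodrigues_succ, add_mul, mul_assoc, ← sq, map_add,
      polyIntegral_C_mul, polyIntegral_mul_legendre_eq_zero hdeg]
    push_cast
    ring

-- Integrate `(x P_l²)' = P_l² + 2 x P_l' P_l` over `[-1, 1]`, where `P_l(±1)² = 1`.
theorem polyIntegral_legendre_sq (l : ℕ) :
    polyIntegral (-1) 1 (derivative^[l] (rodrigues l) ^ 2) = 2 / (2 * l + 1) := by
  have total := polyIntegral_derivative (-1) 1 (X * derivative^[l] (rodrigues l) ^ 2)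
  have expand : derivative (X * derivative^[l] (rodrigues l) ^ 2) =
      derivative^[l] (rodrigues l) ^ 2 +
        C 2 * (X * derivative^[l + 1] (rodrigues l) * derivative^[l] (rodrigues l)) := by
    rw [Function.iterate_succ_apply', derivative_mul, derivative_X, derivative_sq]
    ring
  rw [expand, map_add, polyIntegral_C_mul, polyIntegral_X_mul_derivative_legendre_mul_legendre,
    eval_mul, eval_mul, eval_pow, eval_pow, eval_X, eval_X, eval_legendre_sq l (by norm_num),
    eval_legendre_sq l (by norm_num)] at total
  rw [eq_div_iff (by positivity)]
  linear_combination total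

theorem polyIntegral_iterate_derivative_add_rodrigues_mul {l k n b : ℕ} (h : k = n + b) :
    polyIntegral (-1) 1 (derivative^[l + n] (rodrigues l) * derivative^[b] (rodrigues k)) =
      (-1) ^ n *
        polyIntegral (-1) 1 (derivative^[l] (rodrigues l) * derivative^[k] (rodrigues k)) := by
  have vanish {x : ℝ} (hx : x ^ 2 = 1) (j : ℕ) (hj : j < n) :
      (derivative^[j] (derivative^[b] (rodrigues k))).eval x = 0 := by
    rw [← Function.iterate_add_apply]
    exact eval_iterate_derivative_rodrigues_eq_zero (by omega) hx
  have byParts := polyIntegral_iterate_derivative_mul n (derivative^[l] (rodrigues l))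
    (vanish (x := -1) (by norm_num)) (vanish (x := 1) (by norm_num))
  rwa [← Function.iterate_add_apply, ← Function.iterate_add_apply, ← h, add_comm n l] at byParts

theorem polyIntegral_iterate_derivative_rodrigues_mul {l k a b : ℕ} (h : a + b = l + k) :
    polyIntegral (-1) 1 (derivative^[a] (rodrigues l) * derivative^[b] (rodrigues k)) =
      if l = k then (-1 : ℝ) ^ (a + l) * (2 / (2 * l + 1)) else 0 := by
  have shift :
      polyIntegral (-1) 1 (derivative^[a] (rodrigues l) * derivative^[b] (rodrigues k)) =
        (-1) ^ (a + l) *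
          polyIntegral (-1) 1 (derivative^[l] (rodrigues l) * derivative^[k] (rodrigues k)) := by
    rcases le_total l a with hla | hal
    · obtain ⟨n, rfl⟩ := Nat.exists_eq_add_of_le hla
      rw [polyIntegral_iterate_derivative_add_rodrigues_mul (by omega)]
      congr 1
      exact neg_one_pow_congr (by grind)
    · obtain ⟨n, rfl⟩ := Nat.exists_eq_add_of_le hal
      obtain rfl : b = k + n := by omega
      rw [mul_comm, polyIntegral_iterate_derivative_add_rodrigues_mul (add_comm a n),
        mul_comm (derivative^[k] _)]
      congr 1
      exact neg_one_pow_congr (by grind)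
  rw [shift]
  split_ifs with hlk
  · rw [← hlk, ← sq, polyIntegral_legendre_sq]
  · rw [polyIntegral_legendre_mul_legendre_of_ne hlk, mul_zero]

end Legendre

section Normalization

open Polynomial

/-- The normalization constant of `Y_l^m`, so that
`Y_l^m(θ, φ) = sphHarmNorm l m * P_l^m(cos θ) * e^{imφ}`. -/
def sphHarmNorm (l : ℕ) (m : ℤ) : ℝ :=
  √((2 * l + 1) / (4 * π) * ((l : ℤ) - m).toNat.factorial / ((l : ℤ) + m).toNat.factorial)

theorem sphHarmNorm_pos (l : ℕ) (m : ℤ) : 0 < sphHarmNorm l m :=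
  Real.sqrt_pos.mpr (by positivity)

theorem sphHarmNorm_sq (l : ℕ) (m : ℤ) :
    sphHarmNorm l m ^ 2 =
      (2 * l + 1) / (4 * π) * ((l : ℤ) - m).toNat.factorial / ((l : ℤ) + m).toNat.factorial :=
  Real.sq_sqrt (by positivity)

theorem sphHarmNorm_mul_neg (l : ℕ) (m : ℤ) :
    sphHarmNorm l m * sphHarmNorm l (-m) = (2 * l + 1) / (4 * π) := by
  refine (pow_left_inj₀ (mul_pos (sphHarmNorm_pos l m) (sphHarmNorm_pos l (-m))).le
    (by positivity) two_ne_zero).mp ?_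
  rw [mul_pow, sphHarmNorm_sq, sphHarmNorm_sq, sub_neg_eq_add, ← sub_eq_add_neg]
  field_simp

theorem eta_zero_right (l m : ℤ) :
    eta l m 0 = √(((l : ℝ) ^ 2 - m ^ 2) / ((2 * l - 1) * (2 * l + 1))) := by
  unfold _root_.eta
  congr 1
  norm_num [kdZ]
  ring

theorem eta_neg_left_zero (l m : ℤ) : eta (-l) m 0 = eta l m 0 := by
  rw [eta_zero_right, eta_zero_right]
  push_cast
  congr 2 <;> ring

theorem eta_neg_right_zero (l m : ℤ) : eta l (-m) 0 = eta l m 0 := by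
  rw [eta_zero_right, eta_zero_right]
  push_cast
  rw [neg_sq]

theorem eta_zero_right_eq_zero {l : ℕ} {m : ℤ} (h : m.natAbs = l) : eta l m 0 = 0 := by
  have hsq : ((l : ℤ) : ℝ) ^ 2 = m ^ 2 := by exact_mod_cast h ▸ Int.natAbs_sq m
  rw [eta_zero_right, hsq, sub_self, zero_div, Real.sqrt_zero]

theorem eta_succ_zero_sq {l : ℕ} {m : ℤ} (h : m.natAbs ≤ l) :
    eta (l + 1) m 0 ^ 2 =
      ((l + 1 - m) * (l + 1 + m) : ℝ) / ((2 * l + 1) * (2 * l + 3)) := by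
  have hlower : -(l : ℝ) ≤ m := by exact_mod_cast (by omega : -(l : ℤ) ≤ m)
  have hupper : (m : ℝ) ≤ l := by exact_mod_cast (by omega : m ≤ l)
  have hfactor : (((l + 1 : ℤ) : ℝ) ^ 2 - m ^ 2) /
      ((2 * (l + 1 : ℤ) - 1) * (2 * (l + 1 : ℤ) + 1)) =
        (l + 1 - m) * (l + 1 + m) / ((2 * l + 1) * (2 * l + 3)) := by
    push_cast
    congr 1 <;> ring
  rw [eta_zero_right, hfactor, Real.sq_sqrt]
  exact div_nonneg (mul_nonneg (by linarith) (by linarith)) (by positivity)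

theorem sphHarmNorm_mul_raise {l : ℕ} {m : ℤ} (h : m.natAbs ≤ l) :
    sphHarmNorm l m * ((l + 1 - m) / (2 * l + 1)) =
      eta (l + 1) m 0 * sphHarmNorm (l + 1) m := by
  obtain ⟨a, ha⟩ : ∃ a : ℕ, (l : ℤ) + m = a := ⟨((l : ℤ) + m).toNat, by omega⟩
  obtain ⟨b, hb⟩ : ∃ b : ℕ, (l : ℤ) - m = b := ⟨((l : ℤ) - m).toNat, by omega⟩
  have haR : (l : ℝ) + m = a := by exact_mod_cast ha
  have hbR : (l : ℝ) - m = b := by exact_mod_cast hb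
  have ha' : ((l + 1 : ℕ) : ℤ) + m = (a + 1 : ℕ) := by push_cast; omega
  have hb' : ((l + 1 : ℕ) : ℤ) - m = (b + 1 : ℕ) := by push_cast; omega
  have hraise : (l + 1 - m : ℝ) = b + 1 := by linarith
  have hlower : (l + 1 + m : ℝ) = a + 1 := by linarith
  have hnonneg : 0 ≤ sphHarmNorm l m * ((l + 1 - m) / (2 * l + 1)) := by
    rw [hraise]
    exact mul_nonneg (sphHarmNorm_pos l m).le (by positivity)
  have heta : 0 ≤ eta (l + 1) m 0 := Real.sqrt_nonneg _
  refine (pow_left_inj₀ hnonneg (mul_nonneg heta (sphHarmNorm_pos _ _).le) two_ne_zero).mp ?_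
  rw [mul_pow, mul_pow, eta_succ_zero_sq h, sphHarmNorm_sq, sphHarmNorm_sq, ha', hb', ha, hb,
    hraise, hlower]
  simp only [Int.toNat_natCast, Nat.factorial_succ]
  push_cast
  field_simp
  ring

theorem sphHarmNorm_succ_mul_lower {l : ℕ} {m : ℤ} (h : m.natAbs ≤ l) :
    sphHarmNorm (l + 1) m * ((l + 1 + m) / (2 * l + 3)) = eta (l + 1) m 0 * sphHarmNorm l m := by
  have raise := sphHarmNorm_mul_raise (l := l) (m := -m) (by rwa [Int.natAbs_neg])
  rw [eta_neg_right_zero] at raise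
  have hN := sphHarmNorm_mul_neg l m
  have hN' := sphHarmNorm_mul_neg (l + 1) m
  refine mul_right_cancel₀ (mul_pos (sphHarmNorm_pos l (-m)) (sphHarmNorm_pos (l + 1) (-m))).ne' ?_
  push_cast at raise hN'
  calc _ = sphHarmNorm l (-m) * ((l + 1 + m) / (2 * l + 3)) *
        (sphHarmNorm (l + 1) m * sphHarmNorm (l + 1) (-m)) := by ring
    _ = (2 * l + 1) / (4 * π) * (sphHarmNorm l (-m) * ((l + 1 - -m) / (2 * l + 1))) := by
      rw [hN']
      field_simp
      ring
    _ = _ := by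
      rw [raise, ← hN]
      ring

/-- The polynomial factor of a spherical harmonic:
`Y_l^m(θ, φ) = (-1)^m sin^m θ * sphHarmPoly l m (cos θ) * e^{imφ}`. -/
def sphHarmPoly (l : ℕ) (m : ℤ) : ℝ[X] :=
  C (sphHarmNorm l m) * derivative^[((l : ℤ) + m).toNat] (rodrigues l)

theorem C_eta_mul_sphHarmPoly_pred {l : ℕ} {m : ℤ} (h : m.natAbs ≤ l) :
    C (eta l m 0) * sphHarmPoly (l - 1) m =
      C (sphHarmNorm l m * ((l + m) / (2 * l + 1))) *
        derivative^[((l : ℤ) + m).toNat - 1] (rodrigues (l - 1)) := by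
  rcases h.eq_or_lt with heq | hlt
  · rw [eta_zero_right_eq_zero heq, C_0, zero_mul]
    rcases l.eq_zero_or_pos with rfl | hl
    · obtain rfl : m = 0 := Int.natAbs_eq_zero.mp heq
      simp
    · rcases Int.natAbs_eq_iff.mp heq with hm | hm
      · rw [iterate_derivative_rodrigues_eq_zero (by omega), mul_zero]
      · simp [hm]
  · obtain ⟨l, rfl⟩ : ∃ k, l = k + 1 := ⟨l - 1, by omega⟩
    have hcoeff : sphHarmNorm (l + 1) m * (((l + 1 : ℕ) + m) / (2 * (l + 1 : ℕ) + 1)) =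
        eta (l + 1) m 0 * sphHarmNorm l m := by
      rw [← sphHarmNorm_succ_mul_lower (by omega)]
      push_cast
      ring
    rw [hcoeff, C_mul, Nat.add_sub_cancel, sphHarmPoly, mul_assoc,
      show ((l + 1 : ℕ) + m).toNat - 1 = ((l : ℤ) + m).toNat by omega]
    rfl

theorem X_mul_sphHarmPoly {l : ℕ} {m : ℤ} (h : m.natAbs ≤ l) :
    X * sphHarmPoly l m =
      C (eta (l + 1) m 0) * sphHarmPoly (l + 1) m + C (eta l m 0) * sphHarmPoly (l - 1) m := by
  obtain ⟨a, ha⟩ : ∃ a : ℕ, (l : ℤ) + m = a := ⟨((l : ℤ) + m).toNat, by omega⟩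
  have haR : (a : ℝ) = l + m := by exact_mod_cast ha.symm
  have ha' : ((l + 1 : ℕ) : ℤ) + m = (a + 1 : ℕ) := by push_cast; omega
  calc X * sphHarmPoly l m
      = C (sphHarmNorm l m / (2 * l + 1)) *
          (C (2 * l + 1 : ℝ) * (X * derivative^[a] (rodrigues l))) := by
        rw [← mul_assoc, ← C_mul, div_mul_cancel₀ _ (by positivity), mul_left_comm, sphHarmPoly,
          ha, Int.toNat_natCast]
    _ = C (sphHarmNorm l m * ((l + 1 - m) / (2 * l + 1))) * derivative^[a + 1] (rodrigues (l + 1)) +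
          C (sphHarmNorm l m * ((l + m) / (2 * l + 1))) *
            derivative^[a - 1] (rodrigues (l - 1)) := by
        rw [X_mul_iterate_derivative_rodrigues (by omega), haR,
          show (2 * l + 1 - (l + m) : ℝ) = l + 1 - m by ring, mul_div_left_comm,
          mul_div_left_comm (sphHarmNorm l m), C_mul, C_mul]
        ring
    _ = C (eta (l + 1) m 0) * sphHarmPoly (l + 1) m + C (eta l m 0) * sphHarmPoly (l - 1) m := by
        rw [sphHarmNorm_mul_raise h, C_eta_mul_sphHarmPoly_pred h, C_mul, sphHarmPoly, ha, ha',
          Int.toNat_natCast, Int.toNat_natCast, mul_assoc]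

theorem polyIntegral_sphHarmPoly_mul {l k : ℕ} {m : ℤ} (hl : m.natAbs ≤ l) (hk : m.natAbs ≤ k) :
    polyIntegral (-1) 1 (sphHarmPoly l m * sphHarmPoly k (-m)) =
      if l = k then (-1) ^ m / (2 * π) else 0 := by
  have expand : sphHarmPoly l m * sphHarmPoly k (-m) = C (sphHarmNorm l m * sphHarmNorm k (-m)) *
      (derivative^[((l : ℤ) + m).toNat] (rodrigues l) *
        derivative^[((k : ℤ) + -m).toNat] (rodrigues k)) := by
    rw [sphHarmPoly, sphHarmPoly, C_mul]
    ring
  rw [expand, polyIntegral_C_mul, polyIntegral_iterate_derivative_rodrigues_mul (by omega)]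
  split_ifs with hlk
  · have hsign : (-1 : ℝ) ^ (((l : ℤ) + m).toNat + l) = (-1) ^ m := by
      rw [← zpow_natCast, show ((((l : ℤ) + m).toNat + l : ℕ) : ℤ) = m + 2 * l by omega,
        zpow_add₀ (by norm_num), zpow_mul]
      simp
    subst hlk
    rw [hsign, sphHarmNorm_mul_neg]
    field_simp
    norm_num
  · exact mul_zero _

theorem polyIntegral_X_mul_sphHarmPoly_mul {l k : ℕ} {m : ℤ} (hl : m.natAbs ≤ l)
    (hk : m.natAbs ≤ k) :
    polyIntegral (-1) 1 (X * sphHarmPoly l m * sphHarmPoly k (-m)) =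
      (-1) ^ m / (2 * π) *
        ((if l + 1 = k then eta (l + 1) m 0 else 0) + if l = k + 1 then eta l m 0 else 0) := by
  have lower : eta l m 0 * polyIntegral (-1) 1 (sphHarmPoly (l - 1) m * sphHarmPoly k (-m)) =
      (-1) ^ m / (2 * π) * if l = k + 1 then eta l m 0 else 0 := by
    rcases hl.eq_or_lt with heq | hlt
    · rw [eta_zero_right_eq_zero heq]
      simp
    · rw [polyIntegral_sphHarmPoly_mul (by omega) hk]
      simp only [show l - 1 = k ↔ l = k + 1 by omega]
      split_ifs <;> ring
  rw [X_mul_sphHarmPoly hl, add_mul, map_add, mul_assoc, mul_assoc, polyIntegral_C_mul,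
    polyIntegral_C_mul, lower, polyIntegral_sphHarmPoly_mul (by omega) hk, mul_add]
  congr 1
  split_ifs <;> ring

theorem polyIntegral_X_mul_sphHarmPoly_mul_X_mul_sphHarmPoly {l k : ℕ} {m : ℤ}
    (hl : m.natAbs ≤ l) (hk : m.natAbs ≤ k) :
    polyIntegral (-1) 1 (X * sphHarmPoly l m * (X * sphHarmPoly k (-m))) =
      (-1) ^ m / (2 * π) *
        (eta (k + 1) m 0 * ((if l = k then eta (l + 1) m 0 else 0) +
            if l = k + 2 then eta l m 0 else 0) +
          eta k m 0 * ((if l + 2 = k then eta (l + 1) m 0 else 0) +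
            if l = k then eta l m 0 else 0)) := by
  have hk' : (-m).natAbs ≤ k := by rwa [Int.natAbs_neg]
  have lower : eta k m 0 *
      polyIntegral (-1) 1 (X * sphHarmPoly l m * sphHarmPoly (k - 1) (-m)) =
        (-1) ^ m / (2 * π) * (eta k m 0 *
          ((if l + 2 = k then eta (l + 1) m 0 else 0) + if l = k then eta l m 0 else 0)) := by
    rcases hk.eq_or_lt with heq | hlt
    · rw [eta_zero_right_eq_zero heq]
      ring
    · rw [polyIntegral_X_mul_sphHarmPoly_mul hl (by omega)]
      simp only [show l + 1 = k - 1 ↔ l + 2 = k by omega, show l = k - 1 + 1 ↔ l = k by omega]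
      ring
  have expand : X * sphHarmPoly l m * (X * sphHarmPoly k (-m)) =
      C (eta (k + 1) m 0) * (X * sphHarmPoly l m * sphHarmPoly (k + 1) (-m)) +
        C (eta k m 0) * (X * sphHarmPoly l m * sphHarmPoly (k - 1) (-m)) := by
    rw [X_mul_sphHarmPoly hk', eta_neg_right_zero, eta_neg_right_zero]
    ring
  rw [expand, map_add, polyIntegral_C_mul, polyIntegral_C_mul, lower,
    polyIntegral_X_mul_sphHarmPoly_mul hl (by omega)]
  simp only [Nat.add_right_cancel_iff, add_assoc, one_add_one_eq_two]
  ring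

end Normalization

section Sphere

open Polynomial

theorem exp_int_mul_arg {r : ℝ} (hr : 0 < r) (φ : ℝ) (m : ℤ) :
    Complex.exp (Complex.I * m *
        (Complex.arg (((r * cos φ : ℝ) : ℂ) + ((r * sin φ : ℝ) : ℂ) * Complex.I) : ℝ)) =
      Complex.exp (Complex.I * m * φ) := by
  have polar : ((r * cos φ : ℝ) : ℂ) + ((r * sin φ : ℝ) : ℂ) * Complex.I =
      r * Complex.exp (φ * Complex.I) := by
    rw [Complex.exp_mul_I]
    push_cast
    ring
  have hnorm : ‖(r : ℂ) * Complex.exp (φ * Complex.I)‖ = r := by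
    rw [norm_mul, Complex.norm_exp_ofReal_mul_I, mul_one, Complex.norm_real,
      Real.norm_of_nonneg hr.le]
  have hphase := Complex.norm_mul_exp_arg_mul_I (r * Complex.exp (φ * Complex.I))
  rw [hnorm] at hphase
  have hpow (t : ℝ) : Complex.exp (Complex.I * m * t) = Complex.exp (t * Complex.I) ^ m := by
    rw [← Complex.exp_int_mul]
    ring_nf
  rw [polar, hpow, hpow, mul_left_cancel₀ (Complex.ofReal_ne_zero.mpr hr.ne') hphase]

theorem integral_exp_I_mul_int_mul (n : ℤ) :
    ∫ φ in (0 : ℝ)..(2 * π), Complex.exp (Complex.I * n * φ) =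
      if n = 0 then 2 * (π : ℂ) else 0 := by
  split_ifs with hn
  · simp [hn]
  · have period : Complex.exp (Complex.I * n * (2 * π : ℝ)) = 1 := by
      rw [← Complex.exp_int_mul_two_pi_mul_I n]
      push_cast
      ring_nf
    rw [integral_exp_mul_complex (by simp [hn]), period]
    simp

theorem iteratedDeriv_polynomial_eval (p : ℝ[X]) (n : ℕ) :
    iteratedDeriv n (fun x => p.eval x) = fun x => (derivative^[n] p).eval x := by
  induction n with
  | zero => simp
  | succ n ih =>
    rw [iteratedDeriv_succ, ih, Function.iterate_succ_apply']
    exact funext fun x => Polynomial.deriv _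

theorem assocLegendre_eq_eval (l : ℕ) (m : ℤ) (x : ℝ) :
    assocLegendre l m x = (-1) ^ m * (1 - x ^ 2) ^ ((m : ℝ) / 2) *
      (derivative^[((l : ℤ) + m).toNat] (rodrigues l)).eval x := by
  rw [assocLegendre, rodrigues, iterate_derivative_C_mul, eval_mul, eval_C,
    ← congrFun (iteratedDeriv_polynomial_eval _ _)]
  simp only [eval_pow, eval_sub, eval_X, eval_one]
  ring

/-- The point of the unit sphere with polar angle `θ` and azimuth `φ`. -/
def spherePoint (θ φ : ℝ) : V3 := ![sin θ * cos φ, sin θ * sin φ, cos θ]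

theorem sphHarm_spherePoint (l : ℕ) (m : ℤ) {θ : ℝ} (hθ : 0 < sin θ) (φ : ℝ) :
    sphHarm l m (spherePoint θ φ) =
      ((-1) ^ m * sin θ ^ m * (sphHarmPoly l m).eval (cos θ) : ℝ) *
        Complex.exp (Complex.I * m * φ) := by
  have hsin : (1 - cos θ ^ 2) ^ ((m : ℝ) / 2) = sin θ ^ m := by
    rw [← Real.sin_sq, ← Real.rpow_natCast, ← Real.rpow_mul hθ.le, ← Real.rpow_intCast]
    congr 1
    push_cast
    ring
  have hphase := exp_int_mul_arg hθ φ m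
  change ((sphHarmNorm l m * assocLegendre l m (cos θ) : ℝ) : ℂ) * Complex.exp (Complex.I * m *
    (Complex.arg (((sin θ * cos φ : ℝ) : ℂ) + ((sin θ * sin φ : ℝ) : ℂ) * Complex.I) : ℝ)) = _
  rw [hphase, assocLegendre_eq_eval, hsin, sphHarmPoly, eval_mul, eval_C]
  congr 2
  ring

theorem sphereIntegral_of_eq_mul_exp {F : V3 → ℂ} {g : ℝ → ℝ} {n : ℤ}
    (hF : ∀ θ φ, 0 < sin θ → F (spherePoint θ φ) = g θ * Complex.exp (Complex.I * n * φ)) :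
    sphereIntegral F =
      ((if n = 0 then 2 * π * ∫ θ in (0 : ℝ)..π, g θ * sin θ else 0 : ℝ) : ℂ) := by
  have azimuth (θ : ℝ) (hθ : θ ∈ Set.uIcc 0 π) :
      ∫ φ in (0 : ℝ)..(2 * π), F (spherePoint θ φ) * (sin θ : ℂ) =
        ((g θ * sin θ : ℝ) : ℂ) * if n = 0 then 2 * (π : ℂ) else 0 := by
    rw [Set.uIcc_of_le pi_pos.le] at hθ
    rcases (sin_nonneg_of_mem_Icc hθ).eq_or_lt with hsin | hsin
    · simp [← hsin]
    · rw [← integral_exp_I_mul_int_mul, ← intervalIntegral.integral_const_mul]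
      refine intervalIntegral.integral_congr fun φ _ => ?_
      simp only [hF θ φ hsin]
      push_cast
      ring
  refine (intervalIntegral.integral_congr azimuth).trans ?_
  rw [intervalIntegral.integral_mul_const, intervalIntegral.integral_ofReal]
  split_ifs
  · push_cast
    ring
  · simp

theorem integral_comp_cos_mul_sin (f : ℝ → ℝ) :
    ∫ θ in (0 : ℝ)..π, f (cos θ) * sin θ = ∫ x in (-1 : ℝ)..1, f x := by
  have subst := intervalIntegral.integral_comp_mul_deriv_of_deriv_nonpos (a := 0) (b := π)
    (f := cos) (f' := fun θ => -sin θ) (g := f) continuous_cos.continuousOn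
    (fun θ _ => hasDerivAt_cos θ) (fun θ hθ => by
      rw [min_eq_left pi_pos.le, max_eq_right pi_pos.le] at hθ
      exact neg_nonpos.mpr (sin_pos_of_mem_Ioo hθ).le)
  simp only [Function.comp_apply, mul_neg, intervalIntegral.integral_neg, cos_zero, cos_pi] at subst
  rw [intervalIntegral.integral_symm 1 (-1), ← subst, neg_neg]

theorem sphereIntegral_mul_sphHarm_mul_sphHarm (g : ℝ → ℝ) (l l' : ℕ) (m m' : ℤ) :
    sphereIntegral (fun n => (g (n 2) : ℂ) * sphHarm l m n * sphHarm l' m' n) =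
      ((if m = -m' then 2 * π * ∫ x in (-1 : ℝ)..1,
        g x * ((sphHarmPoly l m).eval x * (sphHarmPoly l' m').eval x) else 0 : ℝ) : ℂ) := by
  have separate (θ φ : ℝ) (hθ : 0 < sin θ) :
      (g (spherePoint θ φ 2) : ℂ) * sphHarm l m (spherePoint θ φ) *
          sphHarm l' m' (spherePoint θ φ) =
        (g (cos θ) * (((-1) ^ (m + m') * sin θ ^ (m + m')) *
          ((sphHarmPoly l m).eval (cos θ) * (sphHarmPoly l' m').eval (cos θ))) : ℝ) *
          Complex.exp (Complex.I * (m + m' : ℤ) * φ) := by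
    rw [sphHarm_spherePoint l m hθ, sphHarm_spherePoint l' m' hθ, zpow_add₀ (by norm_num),
      zpow_add₀ hθ.ne', Int.cast_add, mul_add, add_mul, Complex.exp_add,
      show spherePoint θ φ 2 = cos θ from rfl]
    push_cast
    ring
  rw [sphereIntegral_of_eq_mul_exp separate]
  simp only [eq_neg_iff_add_eq_zero]
  split_ifs with hm
  · simp only [hm, zpow_zero, one_mul]
    rw [integral_comp_cos_mul_sin
      fun x => g x * ((sphHarmPoly l m).eval x * (sphHarmPoly l' m').eval x)]
  · rfl

end Sphere

/-- explicit formula for F₃₃(l₁,m₁,l₂,m₂) = ∫_{S²} n₃² Y_{l₁}^{m₁} Y_{l₂}^{m₂} dn. -/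
theorem F33_explicit (l1 l2 : ℕ) (m1 m2 : ℤ) (h1 : m1.natAbs ≤ l1) (h2 : m2.natAbs ≤ l2) :
    sphereIntegral (fun n => ((n 2 ^ 2 : ℝ) : ℂ) * sphHarm l1 m1 n * sphHarm l2 m2 n) =
      (((-1 : ℝ) ^ m2 *
        ∑ k ∈ Finset.range 2, ∑ j ∈ Finset.range 2,
          eta ((if k = 0 then 1 else 0) + (-1) ^ k * l2) m2 0 *
            eta ((-1) ^ j * l1 + (if j = 0 then 1 else 0)) m1 0 *
            (if (l1 : ℤ) + (if k = 1 then 1 else 0) - (if j = 1 then 1 else 0) =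
                (l2 : ℤ) - (if k = 1 then 1 else 0) + (if j = 1 then 1 else 0)
              then (1 : ℝ) else 0) *
            (if m1 = -m2 then (1 : ℝ) else 0) : ℝ) : ℂ) := by
  refine (sphereIntegral_mul_sphHarm_mul_sphHarm (· ^ 2) l1 l2 m1 m2).trans ?_
  congr 1
  by_cases hm : m1 = -m2
  swap
  · simp only [hm, if_false, mul_zero, Finset.sum_const_zero]
  obtain rfl : m2 = -m1 := (neg_eq_iff_eq_neg.mpr hm).symm
  have hpoly : ∫ x in (-1 : ℝ)..1,
      x ^ 2 * ((sphHarmPoly l1 m1).eval x * (sphHarmPoly l2 (-m1)).eval x) =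
        polyIntegral (-1) 1
          (Polynomial.X * sphHarmPoly l1 m1 * (Polynomial.X * sphHarmPoly l2 (-m1))) := by
    rw [polyIntegral_apply]
    simp only [Polynomial.eval_mul, Polynomial.eval_X]
    ring_nf
  rw [if_pos hm, hpoly, polyIntegral_X_mul_sphHarmPoly_mul_X_mul_sphHarmPoly h1 (by omega)]
  have hsign : (-1 : ℝ) ^ (-m1) = (-1) ^ m1 := by rw [← inv_zpow', inv_neg_one]
  have hdown : (l1 : ℤ) - 1 = l2 + 1 ↔ l1 = l2 + 2 := by omega
  have hup : (l1 : ℤ) + 1 = l2 - 1 ↔ l1 + 2 = l2 := by omega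
  rw [← mul_assoc (2 * π), mul_div_cancel₀ _ (by positivity)]
  simp only [hsign, hup, hdown, Finset.sum_range_succ, Finset.range_one, Finset.sum_singleton,
    pow_zero, pow_one, one_mul, neg_mul, mul_one, neg_neg, ↓reduceIte, zero_ne_one, one_ne_zero,
    sub_zero, add_zero, zero_add, add_sub_cancel_right, sub_add_cancel, add_comm (1 : ℤ),
    Nat.cast_inj, eta_neg_left_zero, eta_neg_right_zero, mul_ite, mul_zero]
  split_ifs <;> ring
end
end
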